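/- arXiv:1806.07020 — 3 statements merged into one kernel-verified Lean document; each statement's English description precedes it below -/
import Mathlib

section
/- Let ℍ be the hyperbolic plane (the upper half-plane with its hyperbolic metric) and let ε > 0. Let g be a parabolic bijective self-isometry of ℍ, i.e. dist(x, g(x)) > 0 for every x ∈ ℍ and ⨅_{x} dist(x, g(x)) = 0. Then the Margulis cusp 𝒯_ε(g) := ⋃_{i ∈ ℤ, i ≠ 0} {x ∈ ℍ : dist(x, g^i(x)) ≤ ε} is arccosh(√2)-quasiconvex: for all z₁, z₂ ∈ 𝒯_ε(g), every point w with dist(z₁,w) + dist(w,z₂) = dist(z₁,z₂) satisfies infDist(w, 𝒯_ε(g)) ≤ arccosh(√2) = log(1+√2). -/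
open UpperHalfPlane

/-- The Margulis cusp `𝒯_ε(g) = ⋃_{i ≠ 0} {x : dist x (gⁱ x) ≤ ε}` of a parabolic
isometry `g` of the hyperbolic plane. -/
def margulisCusp (ε : ℝ) (g : UpperHalfPlane ≃ᵢ UpperHalfPlane) : Set UpperHalfPlane :=
  ⋃ i ∈ {i : ℤ | i ≠ 0}, {x : UpperHalfPlane | dist x ((g ^ i) x) ≤ ε}


lemma mc_cosh (z w : UpperHalfPlane) :
    Real.cosh (dist z w) = ((z.re - w.re) ^ 2 + z.im ^ 2 + w.im ^ 2) / (2 * z.im * w.im) := by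
  have h1 := z.im_pos
  have h2 := w.im_pos
  rw [UpperHalfPlane.cosh_dist, Complex.dist_eq, Complex.sq_norm, Complex.normSq_apply]
  simp only [Complex.sub_re, Complex.sub_im, UpperHalfPlane.coe_re, UpperHalfPlane.coe_im]
  field_simp
  ring

/-- Points on the segment, given by nonnegative combinations in the hyperboloid model. -/
lemma mc_exists (a c : UpperHalfPlane) (s t : ℝ) (hs : 0 < s) (ht : 0 < t) :
    ∃ (p : UpperHalfPlane) (N : ℝ), 0 < N ∧
      N ^ 2 = s ^ 2 + t ^ 2 + 2 * s * t * Real.cosh (dist a c) ∧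
      ∀ q, N * Real.cosh (dist q p) = s * Real.cosh (dist q a) + t * Real.cosh (dist q c) := by
  have h1 := a.im_pos
  have h2 := c.im_pos
  have hc : 0 < Real.cosh (dist a c) := Real.cosh_pos _
  have hD : 0 < s ^ 2 + t ^ 2 + 2 * s * t * Real.cosh (dist a c) := by positivity
  obtain ⟨N, hN, hN2⟩ : ∃ N : ℝ, 0 < N ∧
      N ^ 2 = s ^ 2 + t ^ 2 + 2 * s * t * Real.cosh (dist a c) :=
    ⟨_, Real.sqrt_pos.2 hD, Real.sq_sqrt hD.le⟩
  have hK : 0 < s / a.im + t / c.im := by positivity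
  obtain ⟨K, hKd⟩ : ∃ K, K = s / a.im + t / c.im := ⟨_, rfl⟩
  obtain ⟨L, hLd⟩ : ∃ L, L = s * a.re / a.im + t * c.re / c.im := ⟨_, rfl⟩
  obtain ⟨M, hMd⟩ : ∃ M, M = s * (a.re ^ 2 + a.im ^ 2) / a.im
      + t * (c.re ^ 2 + c.im ^ 2) / c.im := ⟨_, rfl⟩
  rw [← hKd] at hK
  have hKM : K * M - L ^ 2 = N ^ 2 := by
    rw [hN2, hKd, hLd, hMd, mc_cosh]
    field_simp
    ring
  refine ⟨⟨⟨L / K, N / K⟩, div_pos hN hK⟩, N, hN, hN2, fun q => ?_⟩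
  have h3 := q.im_pos
  have e1 : s * Real.cosh (dist q a) + t * Real.cosh (dist q c)
      = ((q.re ^ 2 + q.im ^ 2) * K - 2 * q.re * L + M) / (2 * q.im) := by
    rw [hKd, hLd, hMd, mc_cosh, mc_cosh]
    field_simp
    ring
  have hM : M = (N ^ 2 + L ^ 2) / K := by
    field_simp
    linarith
  rw [e1, mc_cosh, hM]
  simp only [UpperHalfPlane.mk_re, UpperHalfPlane.mk_im]
  field_simp
  ring

/-- Hyperbolic Stewart identity. -/
lemma mc_stewart (x y p : UpperHalfPlane) (h : dist x p + dist p y = dist x y)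
    (q : UpperHalfPlane) :
    Real.sinh (dist x p + dist p y) * Real.cosh (dist q p)
      = Real.sinh (dist p y) * Real.cosh (dist q x)
        + Real.sinh (dist x p) * Real.cosh (dist q y) := by
  have h1 := x.im_pos
  have h2 := y.im_pos
  have h3 := p.im_pos
  have h4 := q.im_pos
  have ca := mc_cosh x p
  have cb := mc_cosh p y
  have cc := mc_cosh x y
  rw [← h] at cc
  have qa := Real.cosh_sq (dist x p)
  have qb := Real.cosh_sq (dist p y)
  have hc := Real.cosh_add (dist x p) (dist p y)
  have hsn := Real.sinh_add (dist x p) (dist p y)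
  rw [mc_cosh q p, mc_cosh q x, mc_cosh q y]
  generalize Real.cosh (dist x p + dist p y) = C at *
  generalize Real.sinh (dist x p + dist p y) = S at *
  generalize Real.cosh (dist x p) = A at *
  generalize Real.sinh (dist x p) = a at *
  generalize Real.cosh (dist p y) = B at *
  generalize Real.sinh (dist p y) = b at *
  obtain ⟨k, hk⟩ : ∃ k, k = S / p.im - b / x.im - a / y.im := ⟨_, rfl⟩
  obtain ⟨l, hl⟩ : ∃ l, l = S * p.re / p.im - b * x.re / x.im - a * y.re / y.im := ⟨_, rfl⟩
  obtain ⟨m, hm⟩ : ∃ m, m = S * (p.re ^ 2 + p.im ^ 2) / p.im - b * (x.re ^ 2 + x.im ^ 2) / x.im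
      - a * (y.re ^ 2 + y.im ^ 2) / y.im := ⟨_, rfl⟩
  have o : k * (p.re ^ 2 + p.im ^ 2) + m - 2 * l * p.re = 0 := by
    have e : k * (p.re ^ 2 + p.im ^ 2) + m - 2 * l * p.re
        = 2 * p.im * (S - b * A - a * B) := by
      rw [hk, hl, hm, ca, cb]; field_simp; ring
    rw [e, hsn]; ring
  have nl : k * m = l ^ 2 := by
    have e : k * m - l ^ 2 = S ^ 2 + b ^ 2 + a ^ 2 - 2 * S * b * A - 2 * S * a * B
        + 2 * a * b * C := by
      rw [hk, hl, hm, ca, cb, cc]; field_simp; ring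
    have : k * m - l ^ 2 = 0 := by
      rw [e, hsn, hc]
      linear_combination (-b ^ 2) * qa + (-a ^ 2) * qb
    linarith
  have z : (l - k * p.re) ^ 2 + (k * p.im) ^ 2 = 0 := by
    linear_combination k * o - nl
  have hk0 : k = 0 := by
    have : (k * p.im) ^ 2 = 0 :=
      le_antisymm (by linarith [sq_nonneg (l - k * p.re)]) (sq_nonneg _)
    have := pow_eq_zero_iff (two_ne_zero) |>.1 this
    rcases mul_eq_zero.1 this with h | h
    · exact h
    · exact absurd h h3.ne'
  have hl0 : l = 0 := by
    rw [hk0] at z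
    have : l ^ 2 = 0 := by linear_combination z
    exact pow_eq_zero_iff (two_ne_zero) |>.1 this
  have hm0 : m = 0 := by
    rw [hk0, hl0] at o; linarith
  have fin : S * (((q.re - p.re) ^ 2 + q.im ^ 2 + p.im ^ 2) / (2 * q.im * p.im))
      - (b * (((q.re - x.re) ^ 2 + q.im ^ 2 + x.im ^ 2) / (2 * q.im * x.im))
      + a * (((q.re - y.re) ^ 2 + q.im ^ 2 + y.im ^ 2) / (2 * q.im * y.im)))
      = ((q.re ^ 2 + q.im ^ 2) * k - 2 * q.re * l + m) / (2 * q.im) := by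
    rw [hk, hl, hm]; field_simp; ring
  rw [hk0, hl0, hm0] at fin
  simp at fin
  linarith

lemma mc_le_of_cosh {a b : ℝ} (hb : 0 ≤ b) (h : Real.cosh a ≤ Real.cosh b) : a ≤ b := by
  rw [Real.cosh_le_cosh, abs_of_nonneg hb] at h
  exact (le_abs_self a).trans h

lemma mc_half (L : ℝ) : Real.cosh L = 2 * Real.cosh (L / 2) ^ 2 - 1 := by
  have h := Real.cosh_two_mul (L / 2)
  have h2 := Real.cosh_sq (L / 2)
  rw [show 2 * (L / 2) = L by ring] at h
  linarith

/-- Midpoints. -/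
lemma mc_mid (x y : UpperHalfPlane) : ∃ m : UpperHalfPlane, ∀ q,
    2 * Real.cosh (dist x y / 2) * Real.cosh (dist q m)
      = Real.cosh (dist q x) + Real.cosh (dist q y) := by
  obtain ⟨m, N, hN, hN2, h⟩ := mc_exists x y 1 1 one_pos one_pos
  have hc := Real.cosh_pos (dist x y / 2)
  have : N = 2 * Real.cosh (dist x y / 2) := by
    rw [mc_half] at hN2
    have : N ^ 2 = (2 * Real.cosh (dist x y / 2)) ^ 2 := by rw [hN2]; ring
    exact (pow_left_inj₀ hN.le (by positivity) two_ne_zero).1 this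
  refine ⟨m, fun q => ?_⟩
  rw [← this, h q]; ring

/-- The midline of a triangle is at most half the third side. -/
lemma mc_midline (x y z m n : UpperHalfPlane)
    (hm : ∀ q, 2 * Real.cosh (dist x y / 2) * Real.cosh (dist q m)
      = Real.cosh (dist q x) + Real.cosh (dist q y))
    (hn : ∀ q, 2 * Real.cosh (dist x z / 2) * Real.cosh (dist q n)
      = Real.cosh (dist q x) + Real.cosh (dist q z)) :
    dist m n ≤ dist y z / 2 := by
  apply mc_le_of_cosh (by positivity)
  have e1 := hm n
  have e2 := hn x
  have e3 := hn y
  rw [dist_comm n m, dist_comm n x, dist_comm n y] at e1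
  rw [dist_self, Real.cosh_zero, mc_half (dist x z)] at e2
  rw [dist_comm y x, mc_half (dist x y), mc_half (dist y z)] at e3
  have t1 := dist_triangle y x z
  have t2 := dist_triangle x y z
  have t3 := dist_triangle x z y
  rw [dist_comm y x] at t1
  rw [dist_comm z y] at t3
  have u1 : Real.cosh (dist y z / 2) ≤ Real.cosh (dist x y / 2 + dist x z / 2) := by
    rw [Real.cosh_le_cosh, abs_of_nonneg (by positivity), abs_of_nonneg (by positivity)]
    linarith
  have u2 : Real.cosh (dist x y / 2 - dist x z / 2) ≤ Real.cosh (dist y z / 2) := by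
    rw [Real.cosh_le_cosh, abs_of_nonneg (show 0 ≤ dist y z / 2 by positivity), abs_le]
    constructor <;> linarith
  rw [Real.cosh_add] at u1
  rw [Real.cosh_sub] at u2
  have pB := Real.cosh_pos (dist x y / 2)
  have pC := Real.cosh_pos (dist x z / 2)
  have sB := Real.cosh_sq (dist x y / 2)
  have sC := Real.cosh_sq (dist x z / 2)
  generalize Real.cosh (dist x y / 2) = B at *
  generalize Real.cosh (dist x z / 2) = C at *
  generalize Real.cosh (dist y z / 2) = A at *
  generalize Real.sinh (dist x y / 2) = b at *
  generalize Real.sinh (dist x z / 2) = c at *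
  generalize Real.cosh (dist m n) = D at *
  have key : A ^ 2 + B ^ 2 + C ^ 2 - 1 ≤ 2 * A * B * C := by
    have := mul_nonneg (sub_nonneg.2 u1) (sub_nonneg.2 u2)
    have e : (B * C + b * c - A) * (A - (B * C - b * c))
        = 2 * A * B * C - A ^ 2 - B ^ 2 * C ^ 2 + b ^ 2 * c ^ 2 := by ring
    rw [e] at this
    have hb : b ^ 2 = B ^ 2 - 1 := by linarith
    have hc : c ^ 2 = C ^ 2 - 1 := by linarith
    rw [hb, hc] at this
    nlinarith
  have f : (4 * B * C) * D = 2 * (A ^ 2 + B ^ 2 + C ^ 2 - 1) := by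
    linear_combination 2 * C * e1 + e2 + e3
  have : (4 * B * C) * D ≤ (4 * B * C) * A := by rw [f]; linarith
  exact le_of_mul_le_mul_left this (by positivity)

/-- Convexity of sublevel sets of displacement functions. -/
lemma mc_convex (h : UpperHalfPlane ≃ᵢ UpperHalfPlane) (ε : ℝ) (x y p : UpperHalfPlane)
    (hx : dist x (h x) ≤ ε) (hy : dist y (h y) ≤ ε) (s t N : ℝ) (hs : 0 < s) (ht : 0 < t)
    (hN : 0 < N) (hN2 : N ^ 2 = s ^ 2 + t ^ 2 + 2 * s * t * Real.cosh (dist x y))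
    (hp : ∀ q, N * Real.cosh (dist q p) = s * Real.cosh (dist q x) + t * Real.cosh (dist q y)) :
    dist p (h p) ≤ ε := by
  have hε : 0 ≤ ε := dist_nonneg.trans hx
  have tr : ∀ q z, dist q (h z) = dist (h.symm q) z := fun q z => by
    conv_lhs => rw [← h.apply_symm_apply q, h.dist_eq]
  obtain ⟨m, hm⟩ := mc_mid x y
  obtain ⟨n, hn⟩ := mc_mid x (h y)
  have hm' : ∀ q, 2 * Real.cosh (dist (h x) (h y) / 2) * Real.cosh (dist q (h m))
      = Real.cosh (dist q (h x)) + Real.cosh (dist q (h y)) := fun q => by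
    rw [h.dist_eq, tr, tr, tr]; exact hm _
  have d1 := mc_midline x y (h y) m n hm hn
  have d2 := mc_midline (h y) (h x) x (h m) n
    (fun q => by rw [dist_comm (h y), hm', add_comm]) (fun q => by rw [dist_comm (h y), hn, add_comm])
  have d3 := dist_triangle m n (h m)
  rw [dist_comm n, ] at d3
  rw [dist_comm (h x) x] at d2
  have d4 : dist m (h m) ≤ (dist x (h x) + dist y (h y)) / 2 := by linarith
  -- diagonals
  have c1 : Real.cosh (dist m (h m)) ≤ Real.cosh ((dist x (h x) + dist y (h y)) / 2) := by
    rw [Real.cosh_le_cosh, abs_of_nonneg (by positivity), abs_of_nonneg (by positivity)]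
    exact d4
  have c2 : Real.cosh ((dist x (h x) + dist y (h y)) / 2) ≤ Real.cosh ε := by
    rw [Real.cosh_le_cosh, abs_of_nonneg (by positivity), abs_of_nonneg (by positivity)]
    linarith
  have cx : Real.cosh (dist x (h x)) ≤ Real.cosh ε := by
    rw [Real.cosh_le_cosh, abs_of_nonneg (by positivity), abs_of_nonneg (by positivity)]
    linarith
  have cy : Real.cosh (dist y (h y)) ≤ Real.cosh ε := by
    rw [Real.cosh_le_cosh, abs_of_nonneg (by positivity), abs_of_nonneg (by positivity)]
    linarith
  have c3 : 2 * Real.cosh ((dist x (h x) + dist y (h y)) / 2)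
      ≤ Real.cosh (dist x (h x)) + Real.cosh (dist y (h y)) := by
    have ea := Real.cosh_add ((dist x (h x) + dist y (h y)) / 2) ((dist x (h x) - dist y (h y)) / 2)
    have eb := Real.cosh_sub ((dist x (h x) + dist y (h y)) / 2) ((dist x (h x) - dist y (h y)) / 2)
    have : 1 ≤ Real.cosh ((dist x (h x) - dist y (h y)) / 2) := Real.one_le_cosh _
    have hpos := Real.cosh_pos ((dist x (h x) + dist y (h y)) / 2)
    rw [show (dist x (h x) + dist y (h y)) / 2 + (dist x (h x) - dist y (h y)) / 2
      = dist x (h x) by ring] at ea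
    rw [show (dist x (h x) + dist y (h y)) / 2 - (dist x (h x) - dist y (h y)) / 2
      = dist y (h y) by ring] at eb
    nlinarith
  have f1 := hm' m
  have f2 := hm (h x)
  have f3 := hm (h y)
  rw [h.dist_eq, dist_comm m (h x), dist_comm m (h y)] at f1
  rw [dist_comm (h x) x, dist_comm (h x) y] at f2
  rw [dist_comm (h y) x, dist_comm (h y) y] at f3
  have g1 := hp (h p)
  have g2 : N * Real.cosh (dist x (h p)) = s * Real.cosh (dist x (h x)) + t * Real.cosh (dist x (h y)) := by
    rw [tr, tr, tr]; exact hp _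
  have g3 : N * Real.cosh (dist y (h p)) = s * Real.cosh (dist y (h x)) + t * Real.cosh (dist y (h y)) := by
    rw [tr, tr, tr]; exact hp _
  rw [dist_comm (h p) p, dist_comm (h p) x, dist_comm (h p) y] at g1
  have hL := mc_half (dist x y)
  have pL := Real.one_le_cosh (dist x y)
  apply mc_le_of_cosh hε
  generalize Real.cosh ((dist x (h x) + dist y (h y)) / 2) = e at *
  generalize Real.cosh (dist x y) = CL at *
  generalize Real.cosh (dist x y / 2) = HL at *
  generalize Real.cosh (dist m (h m)) = DM at *
  generalize Real.cosh (dist p (h p)) = DP at *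
  generalize Real.cosh (dist x (h x)) = E1 at *
  generalize Real.cosh (dist y (h y)) = E2 at *
  generalize Real.cosh (dist x (h y)) = C1 at *
  generalize Real.cosh (dist y (h x)) = C2 at *
  generalize Real.cosh ε = E at *
  have k1 : 2 * (1 + CL) * DM = E1 + E2 + C1 + C2 := by
    rw [hL]; linear_combination 2 * HL * f1 + f2 + f3
  have k2 : C1 + C2 ≤ 2 * E * CL := by nlinarith
  have k3 : N ^ 2 * DP = s ^ 2 * E1 + t ^ 2 * E2 + s * t * (C1 + C2) := by
    linear_combination N * g1 + s * g2 + t * g3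
  have k4 : N ^ 2 * DP ≤ N ^ 2 * E := by
    rw [k3, hN2]
    have a1 := mul_le_mul_of_nonneg_left cx (sq_nonneg s)
    have a2 := mul_le_mul_of_nonneg_left cy (sq_nonneg t)
    have a3 := mul_le_mul_of_nonneg_left k2 (mul_pos hs ht).le
    nlinarith
  exact le_of_mul_le_mul_left k4 (by positivity)

lemma mc_sinh_log : Real.cosh (Real.log (1 + Real.sqrt 2)) = Real.sqrt 2 := by
  have h2 : Real.sqrt 2 ^ 2 = 2 := Real.sq_sqrt (by norm_num)
  have hp : 0 < 1 + Real.sqrt 2 := by positivity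
  rw [Real.cosh_log hp]
  field_simp
  nlinarith

/-- An obtuse angle at `w`: the opposite side passes within `log (1+√2)`. -/
lemma mc_obtuse (h : UpperHalfPlane ≃ᵢ UpperHalfPlane) (ε : ℝ) (w a c : UpperHalfPlane)
    (ha : dist a (h a) ≤ ε) (hc : dist c (h c) ≤ ε)
    (hang : Real.cosh (dist w a) * Real.cosh (dist w c) ≤ Real.cosh (dist a c)) :
    ∃ p, dist p (h p) ≤ ε ∧ dist w p ≤ Real.log (1 + Real.sqrt 2) := by
  have pu := Real.cosh_pos (dist w a)
  have pv := Real.cosh_pos (dist w c)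
  obtain ⟨p, N, hN, hN2, hp⟩ := mc_exists a c _ _ pv pu
  refine ⟨p, mc_convex h ε a c p ha hc _ _ N pv pu hN hN2 hp, ?_⟩
  have hw := hp w
  apply mc_le_of_cosh (Real.log_nonneg (by linarith [Real.sqrt_nonneg 2]))
  rw [mc_sinh_log]
  apply Real.le_sqrt_of_sq_le
  generalize Real.cosh (dist w a) = u at *
  generalize Real.cosh (dist w c) = v at *
  generalize Real.cosh (dist a c) = C at *
  generalize Real.cosh (dist w p) = D at *
  have : N ^ 2 * D ^ 2 ≤ N ^ 2 * 2 := by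
    have e : N ^ 2 * D ^ 2 = 4 * (u * v) * (u * v) := by
      rw [← mul_pow, hw]; ring
    have := mul_le_mul_of_nonneg_left hang (mul_pos pu pv).le
    rw [e, hN2]
    nlinarith [sq_nonneg u, sq_nonneg v]
  exact le_of_mul_le_mul_left this (by positivity)

lemma mc_angle (a b w c : UpperHalfPlane) (h : dist a w + dist w b = dist a b) :
    Real.cosh (dist w a) * Real.cosh (dist w c) ≤ Real.cosh (dist a c) ∨
    Real.cosh (dist w b) * Real.cosh (dist w c) ≤ Real.cosh (dist b c) := by
  rcases eq_or_ne a w with rfl | haw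
  · left; simp
  by_contra! hcon
  obtain ⟨h1, h2⟩ := hcon
  have st := mc_stewart a b w h c
  rw [Real.sinh_add, dist_comm c w, dist_comm c a, dist_comm c b] at st
  rw [dist_comm w a] at h1
  have sa : 0 < Real.sinh (dist a w) := Real.sinh_pos_iff.2 (dist_pos.2 haw)
  have sb : 0 ≤ Real.sinh (dist w b) := Real.sinh_nonneg_iff.2 dist_nonneg
  have := mul_le_mul_of_nonneg_left h1.le sb
  have := mul_lt_mul_of_pos_left h2 sa
  nlinarith

lemma mc_pow (g : UpperHalfPlane ≃ᵢ UpperHalfPlane) (x : UpperHalfPlane) (n : ℕ) :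
    dist x ((g ^ n) x) ≤ n * dist x (g x) := by
  induction n with
  | zero => simp
  | succ k ih =>
    have e : (g ^ (k + 1)) x = (g ^ k) (g x) := by rw [pow_succ]; rfl
    have t := dist_triangle x ((g ^ k) x) ((g ^ (k + 1)) x)
    rw [e, (g ^ k).dist_eq] at t
    rw [e]; push_cast; linarith

lemma mc_zpow (g : UpperHalfPlane ≃ᵢ UpperHalfPlane) (x : UpperHalfPlane) (i : ℤ) :
    dist x ((g ^ i) x) ≤ i.natAbs * dist x (g x) := by
  rcases Int.natAbs_eq i with h | h
  · conv_lhs => rw [h, zpow_natCast]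
    exact mc_pow g x _
  · conv_lhs => rw [h, zpow_neg, zpow_natCast]
    have e : dist x ((g ^ i.natAbs)⁻¹ x) = dist x ((g ^ i.natAbs) x) := by
      rw [← (g ^ i.natAbs).dist_eq, IsometryEquiv.apply_inv_self, dist_comm]
    rw [e]; exact mc_pow g x _

/-- Corollary 3.8 (qctube), parabolic case, for `X = ℍ`: the Margulis cusp of a
parabolic isometry is `arccosh √2 = log (1+√2)`-quasiconvex. -/
theorem margulisCusp_quasiconvex (ε : ℝ) (hε : 0 < ε)
    (g : UpperHalfPlane ≃ᵢ UpperHalfPlane)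
    (hpos : ∀ x : UpperHalfPlane, 0 < dist x (g x))
    (hinf : (⨅ x : UpperHalfPlane, dist x (g x)) = 0) :
    ∀ z₁ ∈ margulisCusp ε g, ∀ z₂ ∈ margulisCusp ε g, ∀ w : UpperHalfPlane,
      dist z₁ w + dist w z₂ = dist z₁ z₂ →
        Metric.infDist w (margulisCusp ε g) ≤ Real.log (1 + Real.sqrt 2) := by
  intro z₁ h₁ z₂ h₂ w hw
  simp only [margulisCusp, Set.mem_iUnion, Set.mem_setOf_eq, exists_prop] at h₁ h₂
  obtain ⟨i, hi, h₁⟩ := h₁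
  obtain ⟨j, hj, h₂⟩ := h₂
  have hpi : (0 : ℝ) < i.natAbs := by exact_mod_cast Int.natAbs_pos.2 hi
  have hpj : (0 : ℝ) < j.natAbs := by exact_mod_cast Int.natAbs_pos.2 hj
  obtain ⟨x, hx⟩ : ∃ x, dist x (g x) < ε / (i.natAbs + j.natAbs) := by
    apply exists_lt_of_ciInf_lt
    rw [hinf]; positivity
  rw [lt_div_iff₀ (by positivity)] at hx
  have hx0 : 0 ≤ dist x (g x) := dist_nonneg
  have hxi : dist x ((g ^ i) x) ≤ ε := (mc_zpow g x i).trans (by nlinarith)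
  have hxj : dist x ((g ^ j) x) ≤ ε := (mc_zpow g x j).trans (by nlinarith)
  have fin : ∀ (k : ℤ), k ≠ 0 → (∃ p, dist p ((g ^ k) p) ≤ ε ∧
      dist w p ≤ Real.log (1 + Real.sqrt 2)) →
      Metric.infDist w (margulisCusp ε g) ≤ Real.log (1 + Real.sqrt 2) := by
    rintro k hk ⟨p, hp, hd⟩
    refine (Metric.infDist_le_dist_of_mem ?_).trans hd
    simp only [margulisCusp, Set.mem_iUnion, Set.mem_setOf_eq, exists_prop]
    exact ⟨k, hk, hp⟩
  rcases mc_angle z₁ z₂ w x hw with h | h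
  · exact fin i hi (mc_obtuse (g ^ i) ε w z₁ x h₁ hxi h)
  · exact fin j hj (mc_obtuse (g ^ j) ε w z₂ x h₂ hxj h)
end

section
/- Let ℍ be the hyperbolic plane (the upper half-plane with its hyperbolic metric). For every ε > 0 there exists L > 0 with the following property. Let g and h be parabolic bijective self-isometries of ℍ (everywhere positive displacement with infimum 0), set 𝒯_ε(g) := ⋃_{i∈ℤ, i≠0} {x : dist(x, g^i(x)) ≤ ε} and likewise 𝒯_ε(h), and let Hull(𝒯_ε(g)), Hull(𝒯_ε(h)) be their closed convex hulls. If dist(p, q) ≥ L for all p ∈ Hull(𝒯_ε(g)) and q ∈ Hull(𝒯_ε(h)), then g and h generate a free group of rank two: the homomorphism from the free group on two generators to the group of bijective self-isometries of ℍ determined by g and h is injective. -/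
open UpperHalfPlane

/-- A subset of the hyperbolic plane is (geodesically) convex if it contains every
point between two of its points. -/
def GeodesicallyConvex (A : Set UpperHalfPlane) : Prop :=
  ∀ x ∈ A, ∀ y ∈ A, ∀ z : UpperHalfPlane, dist x z + dist z y = dist x y → z ∈ A

/-- The closed convex hull of a subset of the hyperbolic plane: the intersection of all
closed convex subsets containing it. -/
def hypConvexHull (A : Set UpperHalfPlane) : Set UpperHalfPlane :=
  ⋂₀ {C : Set UpperHalfPlane | A ⊆ C ∧ IsClosed C ∧ GeodesicallyConvex C}

open scoped MatrixGroups

/-- `w` is the image of `z` under the Moebius map with coefficients `a b c d`. -/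
def PPMob (a b c d : ℝ) (z w : ℍ) : Prop :=
  w.re = ((a * z.re + b) * (c * z.re + d) + a * c * z.im ^ 2) /
      ((c * z.re + d) ^ 2 + (c * z.im) ^ 2) ∧
  w.im = z.im / ((c * z.re + d) ^ 2 + (c * z.im) ^ 2)

theorem pp_cosh (z w : ℍ) : 2 * (Real.cosh (dist z w) - 1) * (z.im * w.im) =
    (z.re - w.re) ^ 2 + (z.im - w.im) ^ 2 := by
  have h1 := z.im_pos
  have h2 := w.im_pos
  rw [UpperHalfPlane.cosh_dist, Complex.dist_eq, ← Complex.normSq_eq_norm_sq, Complex.normSq_apply]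
  simp only [Complex.sub_re, Complex.sub_im, coe_re, coe_im]
  field_simp
  ring

theorem pp_N_pos {a b c d : ℝ} (h : a * d - b * c = 1) (z : ℍ) :
    0 < (c * z.re + d) ^ 2 + (c * z.im) ^ 2 := by
  have h1 := z.im_pos
  by_cases hc : c = 0
  · subst hc
    have : d ≠ 0 := by rintro rfl; simp at h
    simp; positivity
  · have : 0 < (c * z.im) ^ 2 := by positivity
    nlinarith [sq_nonneg (c * z.re + d)]

theorem pp_SL_det (A : SL(2, ℝ)) : A 0 0 * A 1 1 - A 0 1 * A 1 0 = 1 := by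
  have := A.det_coe
  rwa [Matrix.det_fin_two] at this

theorem pp_SL_apply (A : SL(2, ℝ)) (z : ℍ) :
    PPMob (A 0 0) (A 0 1) (A 1 0) (A 1 1) z (A • z) := by
  have hdet := pp_SL_det A
  have hN := pp_N_pos hdet z
  have e := coe_specialLinearGroup_apply A z
  simp only [Algebra.algebraMap_self, RingHom.id_apply] at e
  rw [PPMob, ← coe_re (_ • z), ← coe_im (_ • z), e]
  have hns : Complex.normSq ((A 1 0 : ℂ) * z + (A 1 1 : ℂ)) =
      (A 1 0 * z.re + A 1 1) ^ 2 + (A 1 0 * z.im) ^ 2 := by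
    simp [Complex.normSq_apply]
    ring
  constructor
  · rw [Complex.div_re, ← add_div, hns]
    congr 1
    simp
    ring
  · rw [Complex.div_im, ← sub_div, hns]
    congr 1
    simp
    linear_combination (z.im) * hdet

theorem pp_SL (A : SL(2, ℝ)) : ∃ a b c d : ℝ, a * d - b * c = 1 ∧ ∀ z : ℍ,
    PPMob a b c d z (A • z) :=
  ⟨_, _, _, _, pp_SL_det A, pp_SL_apply A⟩

theorem pp_mk {a b c d : ℝ} (h : a * d - b * c = 1) : ∃ A : SL(2, ℝ), ∀ z : ℍ,
    PPMob a b c d z (A • z) :=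
  ⟨⟨!![a, b; c, d], by rw [Matrix.det_fin_two_of]; exact h⟩, fun z => pp_SL_apply _ z⟩

theorem pp_disp {a b c d : ℝ} (h : a * d - b * c = 1) (z w : ℍ)
    (hm : PPMob a b c d z w) :
    2 * (Real.cosh (dist z w) - 1) * z.im ^ 2 =
     (c * z.re ^ 2 + (d - a) * z.re - b + c * z.im ^ 2) ^ 2 + ((a + d) ^ 2 - 4) * z.im ^ 2 := by
  obtain ⟨h1, h2⟩ := hm
  have hN := pp_N_pos h z
  have e := pp_cosh z w
  rw [h1, h2] at e
  have hy := z.im_pos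
  have hb : b * c = a * d - 1 := by linarith
  set N := (c * z.re + d) ^ 2 + (c * z.im) ^ 2 with hNdef
  have e2 : 2 * (Real.cosh (dist z w) - 1) * z.im ^ 2 * N = (z.re * N - ((a * z.re + b) * (c * z.re + d) + a * c * z.im ^ 2)) ^ 2 +
     (z.im * N - z.im) ^ 2 := by
    field_simp at e
    linear_combination e
  have e3 : z.im * N - z.im = z.im * N - z.im * (a * d - b * c) := by rw [h]; ring
  have e4 : ((a + d) ^ 2 - 4) = (a + d) ^ 2 - 4 * (a * d - b * c) := by rw [h]; ring
  apply mul_right_cancel₀ hN.ne'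
  rw [e2, e3, e4, hNdef]
  ring

theorem pp_disp_anti {a b c d : ℝ} (h : a * d - b * c = 1) (z w v : ℍ)
    (hm : PPMob a b c d v w)
    (hv1 : v.re = - z.re) (hv2 : v.im = z.im) :
    2 * (Real.cosh (dist z w) - 1) * z.im ^ 2 =
     (c * (z.re ^ 2 + z.im ^ 2) - (a + d) * z.re + b) ^ 2 + (d - a) ^ 2 * z.im ^ 2 := by
  obtain ⟨h1, h2⟩ := hm
  have hN := pp_N_pos h v
  have e := pp_cosh z w
  rw [h1, h2] at e
  have hy := z.im_pos
  rw [hv1, hv2] at hN e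
  set N := (c * (-z.re) + d) ^ 2 + (c * z.im) ^ 2 with hNdef
  have e2 : 2 * (Real.cosh (dist z w) - 1) * z.im ^ 2 * N = (z.re * N - ((a * (-z.re) + b) * (c * (-z.re) + d) + a * c * z.im ^ 2)) ^ 2 +
     (z.im * N - z.im) ^ 2 := by
    field_simp at e
    linear_combination e
  have e3 : z.im * N - z.im = z.im * N - z.im * (a * d - b * c) := by rw [h]; ring
  apply mul_right_cancel₀ hN.ne'
  rw [e2, e3, hNdef]
  ring

/-- The point with coordinates `x`, `y`. -/
noncomputable def ppPt (x y : ℝ) (hy : 0 < y) : ℍ := ⟨⟨x, y⟩, hy⟩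

@[simp] theorem ppPt_re (x y : ℝ) (hy : 0 < y) : (ppPt x y hy).re = x := rfl
@[simp] theorem ppPt_im (x y : ℝ) (hy : 0 < y) : (ppPt x y hy).im = y := rfl

theorem pp_ext {z w : ℍ} (h1 : z.re = w.re) (h2 : z.im = w.im) : z = w :=
  UpperHalfPlane.ext (Complex.ext h1 h2)

theorem pp_root (x m : ℝ) : ∃ τ : ℝ, x * τ ^ 2 - m * τ - x = 0 := by
  by_cases hx : x = 0
  · exact ⟨0, by simp [hx]⟩
  · refine ⟨(m + √(m ^ 2 + 4 * x ^ 2)) / (2 * x), ?_⟩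
    have : √(m ^ 2 + 4 * x ^ 2) ^ 2 = m ^ 2 + 4 * x ^ 2 := Real.sq_sqrt (by positivity)
    set r := √(m ^ 2 + 4 * x ^ 2)
    field_simp
    linear_combination this

theorem pp_rot (q : ℍ) (hq : dist I q = dist I (ppPt 0 2 two_pos)) :
    ∃ A : SL(2, ℝ), A • I = I ∧ A • q = ppPt 0 2 two_pos := by
  obtain ⟨τ, hτ⟩ := pp_root q.re (1 - (q.re ^ 2 + q.im ^ 2))
  set r := √(1 + τ ^ 2) with hr
  have hr2 : r ^ 2 = 1 + τ ^ 2 := Real.sq_sqrt (by positivity)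
  have hr0 : 0 < r := Real.sqrt_pos.2 (by positivity)
  have hdet : (1 / r) * (1 / r) - (τ / r) * (-τ / r) = 1 := by
    field_simp
    linarith
  obtain ⟨A, hA⟩ := pp_mk hdet
  have hAI : A • I = I := by
    obtain ⟨h1, h2⟩ := hA I
    apply pp_ext
    · rw [h1]; simp; left; field_simp; ring
    · rw [h2]; simp; field_simp; linarith
  have hre : (A • q).re = 0 := by
    obtain ⟨h1, h2⟩ := hA q
    rw [h1]
    have : ((1 / r * q.re + τ / r) * (-τ / r * q.re + 1 / r) + 1 / r * (-τ / r) * q.im ^ 2) = 0 := by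
      field_simp
      linear_combination - hτ
    rw [this, zero_div]
  have hd : dist I (A • q) = dist I (ppPt 0 2 two_pos) := by
    rw [← hq]
    conv_lhs => rw [← hAI]
    exact dist_smul _ _ _
  have e1 := pp_cosh I (A • q)
  have e2 := pp_cosh I (ppPt 0 2 two_pos)
  rw [hd, hre] at e1
  simp at e1 e2
  have hC : Real.cosh (dist I (ppPt 0 2 two_pos)) = 5 / 4 := by linarith
  rw [hC] at e1
  have e3 : ((A • q).im - 2) * (2 * (A • q).im - 1) = 0 := by linear_combination -2 * e1
  rcases mul_eq_zero.1 e3 with h | h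
  · refine ⟨A, hAI, pp_ext (by simpa using hre) (by simp; linarith)⟩
  · have h5 : (A • q).im = 1 / 2 := by linarith
    obtain ⟨S, hS⟩ := pp_mk (a := 0) (b := -1) (c := 1) (d := 0) (by norm_num)
    refine ⟨S * A, ?_, ?_⟩
    · rw [mul_smul, hAI]
      obtain ⟨h1, h2⟩ := hS I
      apply pp_ext
      · rw [h1]; simp
      · rw [h2]; simp
    · rw [mul_smul]
      obtain ⟨h1, h2⟩ := hS (A • q)
      apply pp_ext
      · rw [h1, hre]; simp
      · rw [h2, hre, h5]; norm_num

theorem pp_class (f : ℍ ≃ᵢ ℍ) : ∃ A : SL(2, ℝ),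
    (∀ z, f z = A • z) ∨ (∀ z, f z = A • ppPt (-z.re) z.im z.im_pos) := by
  obtain ⟨A, hA1, hA2⟩ := pp_rot ((f I).toSL2R⁻¹ • f (ppPt 0 2 two_pos)) (by
    have h1 : (f I).toSL2R⁻¹ • f I = I := by
      rw [inv_smul_eq_iff, toSL2R_smul_I]
    have h2 := dist_smul (f I).toSL2R⁻¹ (f I) (f (ppPt 0 2 two_pos))
    rw [h1, f.dist_eq] at h2
    exact h2)
  set M := A * (f I).toSL2R⁻¹ with hM
  have hM1 : M • f I = I := by
    rw [hM, mul_smul, inv_smul_eq_iff.2 (toSL2R_smul_I (f I)).symm, hA1]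
  have hM2 : M • f (ppPt 0 2 two_pos) = ppPt 0 2 two_pos := by
    rw [hM, mul_smul, hA2]
  have hd : ∀ z w, dist (M • f z) (M • f w) = dist z w := fun z w => by
    rw [dist_smul, f.dist_eq]
  have key : ∀ z, (M • f z).im = z.im ∧ (M • f z).re ^ 2 = z.re ^ 2 := by
    intro z
    have a1 := hd I z
    have a2 := hd (ppPt 0 2 two_pos) z
    rw [hM1] at a1
    rw [hM2] at a2
    have b1 := pp_cosh I (M • f z)
    have b2 := pp_cosh (ppPt 0 2 two_pos) (M • f z)
    have c1 := pp_cosh I z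
    have c2 := pp_cosh (ppPt 0 2 two_pos) z
    rw [a1] at b1
    rw [a2] at b2
    simp at b1 b2 c1 c2
    set u := (M • f z).re
    set v := (M • f z).im with hv
    have hv0 : 0 < v := (M • f z).im_pos
    have hy := z.im_pos
    set C := Real.cosh (dist I z)
    set D := Real.cosh (dist (ppPt 0 2 two_pos) z)
    have d1 : v * (z.re ^ 2 + (1 - z.im) ^ 2) = z.im * (u ^ 2 + (1 - v) ^ 2) := by
      linear_combination z.im * b1 - v * c1
    have d2 : v * (z.re ^ 2 + (2 - z.im) ^ 2) = z.im * (u ^ 2 + (2 - v) ^ 2) := by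
      linear_combination z.im * b2 - v * c2
    have d3 : v = z.im := by linarith
    refine ⟨d3, ?_⟩
    rw [d3] at d1
    have := mul_left_cancel₀ hy.ne' d1
    linarith
  set p := ppPt 1 1 one_pos with hp
  have hpk := key p
  have main : ∀ z, (M • f p).re * (M • f z).re = z.re := by
    intro z
    have a1 := hd p z
    have b1 := pp_cosh (M • f p) (M • f z)
    have c1 := pp_cosh p z
    rw [a1, hpk.1, (key z).1, c1] at b1
    have q1 := hpk.2
    have q2 := (key z).2
    have q3 : p.re = 1 := rfl
    rw [q3] at b1 q1
    linear_combination (q1 + q2 + b1) / 2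
  have h1 : (M • f p).re = 1 ∨ (M • f p).re = -1 := by
    have := hpk.2
    simp only [hp, ppPt_re] at this
    rw [one_pow] at this
    simpa using this
  refine ⟨M⁻¹, ?_⟩
  rcases h1 with h1 | h1
  · left
    intro z
    rw [eq_inv_smul_iff]
    have := main z
    rw [h1] at this
    exact pp_ext (by linarith) (key z).1
  · right
    intro z
    rw [eq_inv_smul_iff]
    have := main z
    rw [h1] at this
    exact pp_ext (by simp; linarith) (key z).1

theorem pp_SL_coe (A : SL(2, ℝ)) (z : ℍ) : ((A 1 0 : ℂ) * z + (A 1 1 : ℂ) ≠ 0) ∧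
    ((A • z : ℍ) : ℂ) = ((A 0 0 : ℂ) * z + (A 0 1 : ℂ)) / ((A 1 0 : ℂ) * z + (A 1 1 : ℂ)) := by
  refine ⟨?_, by simpa using coe_specialLinearGroup_apply A z⟩
  intro h0
  have hN := pp_N_pos (pp_SL_det A) z
  have h1 := congrArg Complex.re h0
  have h2 := congrArg Complex.im h0
  simp at h1 h2
  rw [h1] at hN
  rcases h2 with h2 | h2
  · simp [h2] at hN
  · exact z.im_pos.ne' h2

theorem pp_inv (ξ : ℝ) : ∃ B : SL(2, ℝ), ∀ z : ℍ, ((B • z : ℍ) : ℂ) = -1 / ((z : ℂ) - ξ) := by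
  refine ⟨⟨!![0, -1; 1, -ξ], by rw [Matrix.det_fin_two_of]; ring⟩, fun z => ?_⟩
  have := (pp_SL_coe ⟨!![0, -1; 1, -ξ], by rw [Matrix.det_fin_two_of]; ring⟩ z).2
  rw [this]
  simp [sub_eq_add_neg]

theorem pp_sub_ne (z : ℍ) (ξ : ℝ) : (z : ℂ) - ξ ≠ 0 := by
  intro h
  have := congrArg Complex.im h
  simp at this
  exact z.im_pos.ne' this

theorem pp_small (f : ℍ ≃ᵢ ℍ) (hinf : (⨅ x : ℍ, dist x (f x)) = 0) (D : ℝ)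
    (hD : ∀ z : ℍ, D ≤ 2 * (Real.cosh (dist z (f z)) - 1)) : D ≤ 0 := by
  by_contra! h
  have h1 : 1 < 1 + D / 2 := by linarith
  have h2 : 0 < Real.arcosh (1 + D / 2) := Real.arcosh_pos h1
  obtain ⟨z, hz⟩ := exists_lt_of_ciInf_lt (hinf.trans_lt h2)
  have h3 : Real.cosh (dist z (f z)) < 1 + D / 2 := by
    rw [← Real.cosh_arcosh h1.le]
    exact Real.cosh_lt_cosh.2 (by rwa [abs_of_nonneg dist_nonneg, abs_of_pos h2])
  have := hD z
  linarith

theorem pp_not_fixed (f : ℍ ≃ᵢ ℍ) (hpos : ∀ x : ℍ, 0 < dist x (f x)) (z : ℍ)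
    (h : 2 * (Real.cosh (dist z (f z)) - 1) * z.im ^ 2 = 0) : False := by
  have h1 : z.im ^ 2 ≠ 0 := by have := z.im_pos; positivity
  have h2 := (mul_eq_zero.1 h).resolve_right h1
  have h3 := Real.one_lt_cosh.2 (hpos z).ne'
  linarith

theorem pp_par (f : ℍ ≃ᵢ ℍ) (hpos : ∀ x : ℍ, 0 < dist x (f x))
    (hinf : (⨅ x : ℍ, dist x (f x)) = 0) :
    (∃ s : ℝ, s ≠ 0 ∧ ∀ z, f z = s +ᵥ z) ∨
    (∃ ξ t : ℝ, t ≠ 0 ∧ ∃ B : SL(2, ℝ), (∀ z : ℍ, ((B • z : ℍ) : ℂ) = -1 / ((z : ℂ) - ξ)) ∧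
      ∀ z, B • f z = t +ᵥ B • z) := by
  obtain ⟨A, hA | hA⟩ := pp_class f
  · have hdet := pp_SL_det A
    have hmob := pp_SL_apply A
    have hcoe := pp_SL_coe A
    set a := A 0 0
    set b := A 0 1
    set c := A 1 0
    set d := A 1 1
    have hdisp : ∀ z, 2 * (Real.cosh (dist z (f z)) - 1) * z.im ^ 2 =
     (c * z.re ^ 2 + (d - a) * z.re - b + c * z.im ^ 2) ^ 2 + ((a + d) ^ 2 - 4) * z.im ^ 2 :=
      fun z => pp_disp hdet z (f z) (by rw [hA]; exact hmob z)
    have hle : (a + d) ^ 2 - 4 ≤ 0 := by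
      apply pp_small f hinf
      intro z
      have h1 : 0 < z.im ^ 2 := by have := z.im_pos; positivity
      have := hdisp z
      refine le_of_mul_le_mul_right ?_ h1
      nlinarith [sq_nonneg (c * z.re ^ 2 + (d - a) * z.re - b + c * z.im ^ 2)]
    have hc_of : (a + d) ^ 2 - 4 < 0 → c ≠ 0 := by
      intro h hc
      rw [hc] at hdet
      nlinarith [sq_nonneg (a - d)]
    have htr : (a + d) ^ 2 = 4 := by
      by_contra hne
      have hlt : (a + d) ^ 2 - 4 < 0 := lt_of_le_of_ne hle (fun h => hne (by linarith))
      have hc := hc_of hlt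
      have hs : 0 < √(4 - (a + d) ^ 2) := Real.sqrt_pos.2 (by linarith)
      have hs2 : √(4 - (a + d) ^ 2) ^ 2 = 4 - (a + d) ^ 2 := Real.sq_sqrt (by linarith)
      set r := √(4 - (a + d) ^ 2)
      have hy : 0 < r / |2 * c| := by positivity
      apply pp_not_fixed f hpos (ppPt ((a - d) / (2 * c)) (r / |2 * c|) hy)
      rw [hdisp]
      simp only [ppPt_re, ppPt_im, div_pow, sq_abs]
      rw [hs2]
      have : b = (a * d - 1) / c := by field_simp; linarith
      rw [this]
      field_simp
      ring
    by_cases hc : c = 0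
    · left
      have had : a * d = 1 := by rw [hc] at hdet; linarith
      have hade : a = d := by
        have : (a - d) ^ 2 = 0 := by nlinarith
        have := pow_eq_zero_iff (two_ne_zero) |>.1 this
        linarith
      have hd0 : d ≠ 0 := by rintro h; rw [h] at had; simp at had
      refine ⟨b / d, ?_, ?_⟩
      · intro h0
        have hb : b = 0 := by simpa [hd0] using h0
        apply pp_not_fixed f hpos I
        rw [hdisp, hb, hc, hade]
        rw [hade] at had
        simp
        nlinarith
      · intro z
        apply UpperHalfPlane.ext
        rw [hA, (hcoe z).2, hc, hade, coe_vadd]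
        have : (d : ℂ) ≠ 0 := by exact_mod_cast hd0
        push_cast
        rw [eq_comm, zero_mul, zero_add, add_div, mul_div_cancel_left₀ _ this, add_comm]
    · right
      obtain ⟨B, hB⟩ := pp_inv ((a - d) / (2 * c))
      refine ⟨(a - d) / (2 * c), -c * ((a + d) / 2), ?_, B, hB, ?_⟩
      · have : a + d ≠ 0 := by intro h; rw [h] at htr; norm_num at htr
        exact mul_ne_zero (neg_ne_zero.2 hc) (div_ne_zero this two_ne_zero)
      · intro z
        apply UpperHalfPlane.ext
        rw [hB, coe_vadd, hB]
        have h1 := pp_sub_ne z ((a - d) / (2 * c))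
        have h2 := pp_sub_ne (f z) ((a - d) / (2 * c))
        have h3 := (hcoe z).1
        have h4 : (f z : ℂ) * (c * z + d) = a * z + b := by
          rw [hA, (hcoe z).2, div_mul_cancel₀ _ h3]
        have hc' : (c : ℂ) ≠ 0 := by exact_mod_cast hc
        have hdet' : (a : ℂ) * d - b * c = 1 := by exact_mod_cast hdet
        have htr' : ((a : ℂ) + d) ^ 2 = 4 := by exact_mod_cast htr
        have h5 : (((a - d) / (2 * c) : ℝ) : ℂ) * c = (a - d) / 2 := by
          push_cast; field_simp
        set ξ : ℂ := (((a - d) / (2 * c) : ℝ) : ℂ)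
        have h6 : ((f z : ℂ) - ξ) * (c * (z - ξ) + (a + d) / 2) = (a + d) / 2 * (z - ξ) := by
          have hb : (b : ℂ) = -ξ ^ 2 * c := by
            apply mul_right_cancel₀ hc'
            linear_combination -hdet' + htr' / 4 + (-(ξ * c) - (a - d) / 2) * (-h5)
          linear_combination h4 - ((f z : ℂ) - ξ) * h5 - z * h5 - ξ * h5 + hb
        generalize (f z : ℂ) - ξ = u at *
        generalize (z : ℂ) - ξ = v at *
        push_cast
        field_simp
        linear_combination (a + d) * h6 - (u - v) / 2 * htr'
  · exfalso
    have hdet := pp_SL_det A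
    have hmob := pp_SL_apply A
    set a := A 0 0
    set b := A 0 1
    set c := A 1 0
    set d := A 1 1
    have hdisp : ∀ z, 2 * (Real.cosh (dist z (f z)) - 1) * z.im ^ 2 =
      (c * (z.re ^ 2 + z.im ^ 2) - (a + d) * z.re + b) ^ 2 + (d - a) ^ 2 * z.im ^ 2 :=
      fun z => pp_disp_anti hdet z (f z) (ppPt (-z.re) z.im z.im_pos)
        (by rw [hA]; exact hmob _) rfl rfl
    have hle : (d - a) ^ 2 ≤ 0 := by
      apply pp_small f hinf
      intro z
      have h1 : 0 < z.im ^ 2 := by have := z.im_pos; positivity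
      have := hdisp z
      refine le_of_mul_le_mul_right ?_ h1
      nlinarith [sq_nonneg (c * (z.re ^ 2 + z.im ^ 2) - (a + d) * z.re + b)]
    have hda : d - a = 0 := by
      have := le_antisymm hle (sq_nonneg _)
      exact pow_eq_zero_iff (two_ne_zero) |>.1 this
    have hda' : d = a := by linarith
    by_cases hc : c = 0
    · have ha : a ≠ 0 := by
        intro h
        rw [hc, h] at hdet
        simp at hdet
      apply pp_not_fixed f hpos (ppPt (b / (2 * a)) 1 one_pos)
      rw [hdisp, hda', hc]
      simp
      field_simp
      ring
    · have hy : 0 < 1 / |c| := by positivity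
      apply pp_not_fixed f hpos (ppPt (a / c) (1 / |c|) hy)
      rw [hdisp, hda']
      simp only [ppPt_re, ppPt_im, div_pow, sq_abs]
      rw [hda'] at hdet
      have : b = (a * a - 1) / c := by field_simp; linarith
      rw [this]
      field_simp
      ring

theorem pp_vadd_dist (ε s : ℝ) (hε : 0 < ε) (z : ℍ)
    (h : s ^ 2 ≤ 2 * (Real.cosh ε - 1) * z.im ^ 2) : dist z (s +ᵥ z) ≤ ε := by
  have e := pp_cosh z (s +ᵥ z)
  simp only [vadd_re, vadd_im] at e
  have hy : 0 < z.im ^ 2 := by have := z.im_pos; positivity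
  have h1 : Real.cosh (dist z (s +ᵥ z)) ≤ Real.cosh ε := by
    by_contra! h2
    have : Real.cosh ε * z.im ^ 2 < Real.cosh (dist z (s +ᵥ z)) * z.im ^ 2 :=
      mul_lt_mul_of_pos_right h2 hy
    nlinarith
  have := Real.cosh_le_cosh.1 h1
  rwa [abs_of_nonneg dist_nonneg, abs_of_pos hε] at this

/-- The action of isometries on the plane. -/
@[reducible] noncomputable def ppAct : MulAction (ℍ ≃ᵢ ℍ) ℍ where
  smul g x := g x
  one_smul _ := rfl
  mul_smul _ _ _ := rfl

theorem pp_inv_re (B : SL(2, ℝ)) (ξ : ℝ)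
    (hB : ∀ z : ℍ, ((B • z : ℍ) : ℂ) = -1 / ((z : ℂ) - ξ)) (z : ℍ) :
    (B • z).re * ((z.re - ξ) ^ 2 + z.im ^ 2) = -(z.re - ξ) ∧
    (B • z).im * ((z.re - ξ) ^ 2 + z.im ^ 2) = z.im := by
  have h := hB z
  have h0 := pp_sub_ne z ξ
  rw [eq_div_iff h0] at h
  have h1 := congrArg Complex.re h
  have h2 := congrArg Complex.im h
  simp at h1 h2
  constructor
  · linear_combination (z.re - ξ) * h1 + z.im * h2
  · linear_combination (z.re - ξ) * h2 - z.im * h1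

theorem pp_pingpong (g h : ℍ ≃ᵢ ℍ) (s t ξ : ℝ) (hs : s ≠ 0) (ht : t ≠ 0)
    (hg : ∀ z, g z = s +ᵥ z) (B : SL(2, ℝ))
    (hB : ∀ z : ℍ, ((B • z : ℍ) : ℂ) = -1 / ((z : ℂ) - ξ))
    (hh : ∀ z, B • h z = t +ᵥ B • z) (hst : 4 < |s * t|) :
    Function.Injective (FreeGroup.lift ![g, h]) := by
  letI := ppAct
  have hsm : ∀ (k : ℍ ≃ᵢ ℍ) (z : ℍ), k • z = k z := fun _ _ => rfl
  have hgr : ∀ z, ((g z).re - ξ) / s = (z.re - ξ) / s + 1 := fun z => by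
    rw [hg]; simp; field_simp; ring
  have hhr : ∀ z, (B • h z).re / t = (B • z).re / t + 1 := fun z => by
    rw [hh]; simp; field_simp; ring
  have hgi : ∀ z, ((g⁻¹ z).re - ξ) / s = (z.re - ξ) / s - 1 := fun z => by
    have := hgr (g⁻¹ z)
    rw [IsometryEquiv.apply_inv_self] at this
    linarith
  have hhi : ∀ z, (B • h⁻¹ z).re / t = (B • z).re / t - 1 := fun z => by
    have := hhr (h⁻¹ z)
    rw [IsometryEquiv.apply_inv_self] at this
    linarith
  have hdis : ∀ z : ℍ, 1 / 2 ≤ |(z.re - ξ) / s| → 1 / 2 ≤ |(B • z).re / t| → False := by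
    intro z h1 h2
    obtain ⟨e, -⟩ := pp_inv_re B ξ hB z
    rw [abs_div, le_div_iff₀ (abs_pos.2 hs)] at h1
    rw [abs_div, le_div_iff₀ (abs_pos.2 ht)] at h2
    rw [abs_mul] at hst
    have hs' := abs_pos.2 hs
    have ht' := abs_pos.2 ht
    have e1 : |(B • z).re| * (|z.re - ξ| ^ 2 + z.im ^ 2) = |z.re - ξ| := by
      have := congrArg abs e
      rw [abs_mul, abs_neg, abs_of_pos (a := (z.re - ξ) ^ 2 + z.im ^ 2)
        (by have := z.im_pos; positivity)] at this
      rwa [sq_abs]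
    set u := |z.re - ξ|
    set w := |(B • z).re|
    have hu : 0 < u := by linarith
    have hw : 0 < w := by linarith
    have e2 : w * u ^ 2 ≤ u := by nlinarith [mul_nonneg hw.le (sq_nonneg z.im)]
    have e3 : w * u ≤ 1 := by
      refine le_of_mul_le_mul_right ?_ hu
      linarith
    have e4 : (1 / 2 * |t|) * (1 / 2 * |s|) ≤ w * u := by gcongr
    linarith
  have abs1 : ∀ r : ℝ, 1 / 2 ≤ r → 1 / 2 ≤ |r| := fun r h => h.trans (le_abs_self r)
  have abs2 : ∀ r : ℝ, r < -(1 / 2) → 1 / 2 ≤ |r| := fun r h => by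
    have := neg_le_abs r
    linarith
  let X : Fin 2 → Set ℍ := ![{z | 1 / 2 ≤ (z.re - ξ) / s}, {z | 1 / 2 ≤ (B • z).re / t}]
  let Y : Fin 2 → Set ℍ := ![{z | (z.re - ξ) / s < -(1 / 2)}, {z | (B • z).re / t < -(1 / 2)}]
  refine FreeGroup.injective_lift_of_ping_pong ![g, h] X Y ?_ ?_ ?_ ?_ ?_ ?_
  · intro i
    fin_cases i
    · refine ⟨ppPt (ξ + s) 1 one_pos, ?_⟩
      simp [X, hs]
      norm_num
    · refine ⟨B⁻¹ • ppPt t 1 one_pos, ?_⟩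
      simp [X, ht]
      norm_num
  · intro i j hij
    fin_cases i <;> fin_cases j <;> simp [Function.onFun, Set.disjoint_left, X] at hij ⊢ <;>
      intro z h1 <;> by_contra! h2
    · exact hdis z (abs1 _ (by simpa using h1)) (abs1 _ (by simpa using h2))
    · exact hdis z (abs1 _ (by simpa using h2)) (abs1 _ (by simpa using h1))
  · intro i j hij
    fin_cases i <;> fin_cases j <;> simp [Function.onFun, Set.disjoint_left, Y] at hij ⊢ <;>
      intro z h1 <;> by_contra! h2
    · exact hdis z (abs2 _ (by simpa using h1)) (abs2 _ (by simpa using h2))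
    · exact hdis z (abs2 _ (by simpa using h2)) (abs2 _ (by simpa using h1))
  · intro i j
    rw [Set.disjoint_left]
    intro z h1 h2
    fin_cases i <;> fin_cases j <;> simp only [X, Y] at h1 h2 <;>
     [have h3 : 1 / 2 ≤ (z.re - ξ) / s := h1; have h3 : 1 / 2 ≤ (z.re - ξ) / s := h1;
      have h3 : 1 / 2 ≤ (B • z).re / t := h1; have h3 : 1 / 2 ≤ (B • z).re / t := h1] <;>
     [have h4 : (z.re - ξ) / s < -(1 / 2) := h2; have h4 : (B • z).re / t < -(1 / 2) := h2;
      have h4 : (z.re - ξ) / s < -(1 / 2) := h2; have h4 : (B • z).re / t < -(1 / 2) := h2]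
    · linarith
    · exact hdis z (abs1 _ h3) (abs2 _ h4)
    · exact hdis z (abs2 _ h4) (abs1 _ h3)
    · linarith
  · intro i
    rintro _ ⟨z, hz, rfl⟩
    fin_cases i
    · have h1 : ¬ (z.re - ξ) / s < -(1 / 2) := hz
      change 1 / 2 ≤ ((g z).re - ξ) / s
      rw [hgr]
      linarith
    · have h1 : ¬ (B • z).re / t < -(1 / 2) := hz
      change 1 / 2 ≤ (B • h z).re / t
      rw [hhr]
      linarith
  · intro i
    rintro _ ⟨z, hz, rfl⟩
    fin_cases i
    · have h1 : ¬ 1 / 2 ≤ (z.re - ξ) / s := hz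
      change ((g⁻¹ z).re - ξ) / s < -(1 / 2)
      rw [hgi]
      linarith
    · have h1 : ¬ 1 / 2 ≤ (B • z).re / t := hz
      change (B • h⁻¹ z).re / t < -(1 / 2)
      rw [hhi]
      linarith

theorem pp_main_aux (ε : ℝ) (hε : 0 < ε) (g h : ℍ ≃ᵢ ℍ) (s : ℝ) (hs : s ≠ 0)
    (hg : ∀ z, g z = s +ᵥ z)
    (hpos : ∀ x : ℍ, 0 < dist x (h x)) (hinf : (⨅ x : ℍ, dist x (h x)) = 0)
    (hc : ∀ p q, dist p (g p) ≤ ε → dist q (h q) ≤ ε →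
      Real.log (1 + 5 / (2 * (Real.cosh ε - 1))) ≤ dist p q) :
    Function.Injective (FreeGroup.lift ![g, h]) := by
  have hK : 0 < 2 * (Real.cosh ε - 1) := by
    have := Real.one_lt_cosh.2 hε.ne'
    linarith
  have hkey : ∀ (r : ℝ) (z : ℍ), |r| / √(2 * (Real.cosh ε - 1)) ≤ z.im → dist z (r +ᵥ z) ≤ ε := by
    intro r z hz
    apply pp_vadd_dist ε r hε
    have hk := Real.sqrt_pos.2 hK
    rw [div_le_iff₀ hk] at hz
    have := pow_le_pow_left₀ (abs_nonneg r) hz 2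
    rw [sq_abs, mul_pow, Real.sq_sqrt hK.le] at this
    linarith
  set K := 2 * (Real.cosh ε - 1)
  have hk := Real.sqrt_pos.2 hK
  have hk2 : √K ^ 2 = K := Real.sq_sqrt hK.le
  set k := √K
  have hL : 0 < Real.log (1 + 5 / K) := Real.log_pos (by
    have : 0 < 5 / K := by positivity
    linarith)
  have hs' := abs_pos.2 hs
  rcases pp_par h hpos hinf with ⟨t, ht, hh⟩ | ⟨ξ, t, ht, B, hB, hh⟩
  · exfalso
    have ht' := abs_pos.2 ht
    have hy : 0 < |s| / k + |t| / k := by positivity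
    have hs2 : 0 < |s| / k := by positivity
    have ht2 : 0 < |t| / k := by positivity
    have := hc (ppPt 0 _ hy) (ppPt 0 _ hy)
      (by rw [hg]; apply hkey; simp only [ppPt_im]; linarith)
      (by rw [hh]; apply hkey; simp only [ppPt_im]; linarith)
    rw [dist_self] at this
    linarith
  · have ht' := abs_pos.2 ht
    have hy1 : 0 < |s| / k := by positivity
    have hy2 : 0 < k / |t| := by positivity
    refine pp_pingpong g h s t ξ hs ht hg B hB hh ?_
    set p := ppPt ξ _ hy1 with hp
    set q := ppPt ξ _ hy2 with hq
    have hp1 : dist p (g p) ≤ ε := by rw [hg]; apply hkey; exact le_refl _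
    have hq1 : dist q (h q) ≤ ε := by
      rw [← dist_smul B, hh]
      apply hkey
      have := (pp_inv_re B ξ hB q).2
      have e1 : q.re = ξ := rfl
      have e2 : q.im = k / |t| := rfl
      rw [e1, e2] at this
      have e3 : (B • q).im = |t| / k := by
        have e4 : (B • q).im * (k / |t|) = 1 := by
          apply mul_right_cancel₀ hy2.ne'
          linear_combination this
        field_simp at e4 ⊢
        linarith
      rw [e3]
    rcases le_or_gt (|s| / k) (k / |t|) with h1 | h1
    · exfalso
      have := hc q q (by rw [hg]; apply hkey; exact h1) hq1
      rw [dist_self] at this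
      linarith
    · have h2 := hc p q hp1 hq1
      rw [dist_of_re_eq (show p.re = q.re from rfl), Real.dist_eq,
        show p.im = |s| / k from rfl, show q.im = k / |t| from rfl,
        abs_of_pos (sub_pos.2 (Real.log_lt_log hy2 h1)), ← Real.log_div hy1.ne' hy2.ne'] at h2
      have h3 := (Real.log_le_log_iff (by positivity) (by positivity)).1 h2
      have h4 : |s| / k / (k / |t|) = |s * t| / K := by
        rw [abs_mul, ← hk2]; field_simp
      rw [h4, le_div_iff₀ hK] at h3
      have : (1 + 5 / K) * K = K + 5 := by field_simp
      linarith

/-- Proposition 3.11 (free group 1), parabolic case, for `X = ℍ`: if the closed convex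
hulls of the Margulis cusps of two parabolic isometries `g, h` are at distance at least
`L = L(ε)`, then `g` and `h` generate a free group of rank two. -/
theorem parabolic_pingpong_free (ε : ℝ) (hε : 0 < ε) :
    ∃ L : ℝ, 0 < L ∧ ∀ g h : UpperHalfPlane ≃ᵢ UpperHalfPlane,
      (∀ x : UpperHalfPlane, 0 < dist x (g x)) →
      (⨅ x : UpperHalfPlane, dist x (g x)) = 0 →
      (∀ x : UpperHalfPlane, 0 < dist x (h x)) →
      (⨅ x : UpperHalfPlane, dist x (h x)) = 0 →
      (∀ p ∈ hypConvexHull (margulisCusp ε g),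
        ∀ q ∈ hypConvexHull (margulisCusp ε h), L ≤ dist p q) →
      Function.Injective
        ⇑(FreeGroup.lift ![g, h] :
          FreeGroup (Fin 2) →* (UpperHalfPlane ≃ᵢ UpperHalfPlane)) := by
  have hK : 0 < 2 * (Real.cosh ε - 1) := by
    have := Real.one_lt_cosh.2 hε.ne'
    linarith
  refine ⟨Real.log (1 + 5 / (2 * (Real.cosh ε - 1))), Real.log_pos (by
    have : 0 < 5 / (2 * (Real.cosh ε - 1)) := by positivity
    linarith), ?_⟩
  intro g h hg1 hg2 hh1 hh2 hc
  have hmem : ∀ (f : ℍ ≃ᵢ ℍ) (p : ℍ), dist p (f p) ≤ ε → p ∈ hypConvexHull (margulisCusp ε f) := by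
    intro f p hp
    rw [hypConvexHull, Set.mem_sInter]
    rintro C ⟨hC, -, -⟩
    apply hC
    simp only [margulisCusp, Set.mem_iUnion]
    exact ⟨1, one_ne_zero, by simpa using hp⟩
  have hc' : ∀ p q, dist p (g p) ≤ ε → dist q (h q) ≤ ε →
      Real.log (1 + 5 / (2 * (Real.cosh ε - 1))) ≤ dist p q :=
    fun p q hp hq => hc p (hmem g p hp) q (hmem h q hq)
  rcases pp_par g hg1 hg2 with ⟨s, hs, hg⟩ | ⟨ξ, s, hs, B, -, hg⟩
  · exact pp_main_aux ε hε g h s hs hg hh1 hh2 hc'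
  · let φ : ℍ ≃ᵢ ℍ := IsometryEquiv.constSMul B
    have hφ : ∀ z, φ z = B • z := fun _ => rfl
    have hφi : ∀ z, φ (φ⁻¹ z) = z := fun z => IsometryEquiv.apply_inv_self φ z
    have hd : ∀ (f : ℍ ≃ᵢ ℍ) z, dist z ((φ * f * φ⁻¹) z) = dist (φ⁻¹ z) (f (φ⁻¹ z)) := by
      intro f z
      rw [IsometryEquiv.mul_apply, IsometryEquiv.mul_apply]
      conv_lhs => rw [← hφi z]
      rw [φ.dist_eq]
      simp
    have key := pp_main_aux ε hε (φ * g * φ⁻¹) (φ * h * φ⁻¹) s hs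
      (fun z => by
        rw [IsometryEquiv.mul_apply, IsometryEquiv.mul_apply, hφ, hg, ← hφ, hφi])
      (fun z => by rw [hd]; exact hh1 _)
      (by
        simp_rw [hd]
        rw [← hh2]
        exact φ⁻¹.toEquiv.iInf_congr (fun _ => rfl))
      (fun p q hp hq => by
        rw [hd] at hp hq
        have := hc' _ _ hp hq
        rwa [(φ⁻¹).dist_eq] at this)
    have heq : FreeGroup.lift ![φ * g * φ⁻¹, φ * h * φ⁻¹] =
        (MulAut.conj φ).toMonoidHom.comp (FreeGroup.lift ![g, h]) := by
      ext i
      fin_cases i <;> simp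
    rw [heq, MonoidHom.coe_comp] at key
    exact key.of_comp
end

section
/- Let ℍ be the hyperbolic plane (the upper half-plane with its hyperbolic metric). For every ε > 0 there exists L > 0 with the following property. Let g and h be bijective self-isometries of ℍ that are hyperbolic with equal translation lengths: assume there are isometric embeddings γ_g, γ_h : ℝ → ℍ and a real l with 0 < l ≤ ε/10 such that g(γ_g(s)) = γ_g(s+l) and h(γ_h(s)) = γ_h(s+l) for all s, and ⨅_x dist(x,g(x)) = ⨅_x dist(x,h(x)) = l. Let m be the greatest positive integer with m·l ≤ ε/10, set 𝒯_ε(g) := ⋃_{i=1}^{m} {x : dist(x, g^i(x)) ≤ ε} and likewise 𝒯_ε(h). If dist(p,q) ≥ L for all p ∈ Hull(𝒯_ε(g)) and q ∈ Hull(𝒯_ε(h)), then: (1) the homomorphism ρ from the free group F₂ on two generators to the isometry group of ℍ determined by g and h is injective; and (2) for every y ∈ ℍ there exist c > 0 and C ≥ 0 such that dist(y, ρ(w)(y)) ≥ c·|w| − C for every w ∈ F₂, where |w| is the reduced word length of w. -/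
open UpperHalfPlane

/-- The Margulis tube `𝒯_ε(g) = ⋃_{1 ≤ i ≤ m} {x : dist x (gⁱ x) ≤ ε}` of a hyperbolic
isometry `g` of the hyperbolic plane. -/
def margulisTube (ε : ℝ) (g : UpperHalfPlane ≃ᵢ UpperHalfPlane) (m : ℕ) :
    Set UpperHalfPlane :=
  ⋃ i ∈ Finset.Icc 1 m, {x : UpperHalfPlane | dist x ((g ^ i) x) ≤ ε}

/-- The Lorentz form on `ℝ³`. -/
noncomputable def lor (u v : ℝ × ℝ × ℝ) : ℝ := (u.1 * v.2.2 + u.2.2 * v.1) / 2 - u.2.1 * v.2.1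

/-- The hyperboloid vector of a point. -/
noncomputable def hv (z : UpperHalfPlane) : ℝ × ℝ × ℝ :=
  ((z.re ^ 2 + z.im ^ 2) / z.im, z.re / z.im, 1 / z.im)

/-- Determinant of three vectors. -/
def det3 (u v w : ℝ × ℝ × ℝ) : ℝ :=
  u.1 * (v.2.1 * w.2.2 - v.2.2 * w.2.1) - u.2.1 * (v.1 * w.2.2 - v.2.2 * w.1)
    + u.2.2 * (v.1 * w.2.1 - v.2.1 * w.1)

lemma lor_symm (u v) : lor u v = lor v u := by unfold lor; ring
lemma lor_add_left (u v w) : lor (u + v) w = lor u w + lor v w := by simp [lor]; ring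
lemma lor_add_right (u v w) : lor w (u + v) = lor w u + lor w v := by simp [lor]; ring
lemma lor_sub_left (u v w) : lor (u - v) w = lor u w - lor v w := by simp [lor]; ring
lemma lor_sub_right (u v w) : lor w (u - v) = lor w u - lor w v := by simp [lor]; ring
lemma lor_smul_left (c : ℝ) (u w) : lor (c • u) w = c * lor u w := by simp [lor]; ring
lemma lor_smul_right (c : ℝ) (u w) : lor w (c • u) = c * lor w u := by simp [lor]; ring

lemma gram3 (u v w x y z : ℝ × ℝ × ℝ) : det3 u v w * det3 x y z =
    4 * (lor u x * (lor v y * lor w z - lor v z * lor w y)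
      - lor u y * (lor v x * lor w z - lor v z * lor w x)
      + lor u z * (lor v x * lor w y - lor v y * lor w x)) := by
  unfold det3 lor; ring

lemma lor_hv (x y : UpperHalfPlane) : lor (hv x) (hv y) = Real.cosh (dist x y) := by
  rw [UpperHalfPlane.cosh_dist']
  have := x.im_pos; have := y.im_pos
  simp only [lor, hv]; field_simp; ring

lemma lor_hv_self (x : UpperHalfPlane) : lor (hv x) (hv x) = 1 := by
  rw [lor_hv]; simp

lemma exists_hv (u : ℝ × ℝ × ℝ) (h : lor u u = 1) (h2 : 0 < u.2.2) : ∃ z, hv z = u := by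
  refine ⟨⟨⟨u.2.1 / u.2.2, 1 / u.2.2⟩, by simpa using h2⟩, ?_⟩
  obtain ⟨a, b, c⟩ := u
  simp only [lor] at h h2
  have e1 : UpperHalfPlane.re ⟨⟨b / c, 1 / c⟩, by simpa using h2⟩ = b / c := rfl
  have e2 : UpperHalfPlane.im ⟨⟨b / c, 1 / c⟩, by simpa using h2⟩ = 1 / c := rfl
  simp only [hv, e1, e2, Prod.mk.injEq]
  refine ⟨?_, ?_, ?_⟩ <;> field_simp
  linarith

lemma lor_eq_zero (u : ℝ × ℝ × ℝ) (x : UpperHalfPlane) (h : 0 ≤ lor u u)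
    (h2 : lor u (hv x) = 0) : u = 0 := by
  obtain ⟨a, b, c⟩ := u
  have hy := x.im_pos
  simp only [lor, hv] at h h2
  set y := x.im
  set r := x.re
  have e : a = 2 * b * r - c * (r ^ 2 + y ^ 2) := by
    field_simp at h2; linarith
  have h3 : (b - c * r) ^ 2 + (c * y) ^ 2 ≤ 0 := by subst e; nlinarith
  have h4 : c * y = 0 := by nlinarith [sq_nonneg (b - c * r), sq_nonneg (c * y)]
  have hc : c = 0 := by
    rcases mul_eq_zero.1 h4 with h | h
    · exact h
    · exact absurd h hy.ne'
  subst hc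
  have hb : b = 0 := by nlinarith [sq_nonneg b]
  subst hb
  simp at e
  simp [e]

/-- `γ` is the geodesic with hyperboloid parametrisation `e^s N + e^{-s} M`. -/
def Ax (γ : ℝ → UpperHalfPlane) (N M : ℝ × ℝ × ℝ) : Prop :=
  (∀ s, hv (γ s) = Real.exp s • N + Real.exp (-s) • M) ∧ lor N N = 0 ∧ lor M M = 0 ∧
    lor N M = 1 / 2

lemma exists_ax (γ : ℝ → UpperHalfPlane) (hγ : Isometry γ) : ∃ N M, Ax γ N M := by
  have hd : ∀ s t, lor (hv (γ s)) (hv (γ t)) = Real.cosh (s - t) := by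
    intro s t
    rw [lor_hv, hγ.dist_eq, Real.dist_eq, Real.cosh_abs]
  have hs : 0 < Real.sinh 1 := Real.sinh_pos_iff.2 one_pos
  have hcs := Real.cosh_sq 1
  obtain ⟨τ, hτ⟩ : ∃ τ, τ = (1 / Real.sinh 1) • (hv (γ 1) - Real.cosh 1 • hv (γ 0)) := ⟨_, rfl⟩
  have h00 : lor (hv (γ 0)) (hv (γ 0)) = 1 := lor_hv_self _
  have hst : ∀ s, lor (hv (γ s)) τ = - Real.sinh s := by
    intro s
    rw [hτ, lor_smul_right, lor_sub_right, lor_smul_right, hd, hd, Real.cosh_sub, sub_zero]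
    field_simp; ring
  have h0τ : lor (hv (γ 0)) τ = 0 := by rw [hst]; simp
  have hττ : lor τ τ = -1 := by
    nth_rw 1 [hτ]
    rw [lor_smul_left, lor_sub_left, lor_smul_left, hst, hst]
    field_simp; simp
  have key : ∀ s, hv (γ s) = Real.cosh s • hv (γ 0) + Real.sinh s • τ := by
    intro s
    have hcs := Real.cosh_sq s
    have h0s : lor (hv (γ s)) (hv (γ 0)) = Real.cosh s := by rw [hd, sub_zero]
    rw [← sub_eq_zero]
    apply lor_eq_zero _ (γ 0)
    · simp only [lor_sub_left, lor_sub_right, lor_add_left, lor_add_right, lor_smul_left,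
        lor_smul_right, lor_hv_self, hst, h0τ, hττ, lor_symm τ, lor_symm (hv (γ 0)) (hv (γ s)), h0s,
        Real.sinh_zero]
      nlinarith
    · simp only [lor_sub_left, lor_sub_right, lor_add_left, lor_add_right, lor_smul_left,
        lor_smul_right, lor_hv_self, hst, h0τ, hττ, lor_symm τ, h0s]
      simp
  refine ⟨(1/2 : ℝ) • (hv (γ 0) + τ), (1/2 : ℝ) • (hv (γ 0) - τ), ?_, ?_, ?_, ?_⟩
  · intro s
    rw [key, Real.cosh_eq, Real.sinh_eq]
    module
  all_goals
    simp only [lor_sub_left, lor_sub_right, lor_add_left, lor_add_right, lor_smul_left,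
        lor_smul_right, lor_hv_self, h0τ, hττ, lor_symm τ]
    norm_num

lemma exp_nonneg_aux (U W : ℝ) (h : ∀ s : ℝ, 0 ≤ Real.exp s * U + Real.exp (-s) * W) : 0 ≤ U := by
  by_contra! hU
  have hp : 0 < (|W| + 1) / (-U) := div_pos (by positivity) (by linarith)
  have h1 := h (Real.log ((|W| + 1) / (-U)) / 2)
  set s := Real.log ((|W| + 1) / (-U)) / 2 with hs
  have e : Real.exp s * Real.exp s = (|W| + 1) / (-U) := by
    rw [← Real.exp_add, hs, add_halves, Real.exp_log hp]
  have e2 : Real.exp s * Real.exp (-s) = 1 := by rw [← Real.exp_add]; simp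
  have h2 : 0 ≤ Real.exp s * (Real.exp s * U + Real.exp (-s) * W) :=
    mul_nonneg (Real.exp_pos _).le h1
  have h3 : Real.exp s * (Real.exp s * U + Real.exp (-s) * W) = (|W| + 1) / (-U) * U + W := by
    rw [← e]; linear_combination W * e2
  rw [h3] at h2
  have h4 : (|W| + 1) / (-U) * U = - (|W| + 1) := by
    have := hU.ne
    field_simp
  have := le_abs_self W
  linarith

lemma Ax.rev {γ N M} (h : Ax γ N M) : Ax (fun s => γ (-s)) M N := by
  obtain ⟨h1, h2, h3, h4⟩ := h
  refine ⟨fun s => ?_, h3, h2, by rw [lor_symm, h4]⟩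
  simp only [h1, neg_neg]
  rw [add_comm]

lemma Ax.shift {γ N M} (h : Ax γ N M) (c : ℝ) :
    Ax (fun s => γ (s + c)) (Real.exp c • N) (Real.exp (-c) • M) := by
  obtain ⟨h1, h2, h3, h4⟩ := h
  refine ⟨fun s => ?_, ?_, ?_, ?_⟩
  · simp only [h1, neg_add, Real.exp_add, mul_smul]
  · simp [lor_smul_left, lor_smul_right, h2]
  · simp [lor_smul_left, lor_smul_right, h3]
  · simp only [lor_smul_left, lor_smul_right, h4]
    rw [← mul_assoc, ← Real.exp_add]; simp

lemma Ax.cosh {γ N M} (h : Ax γ N M) (x : UpperHalfPlane) (s : ℝ) :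
    Real.cosh (dist x (γ s)) = Real.exp s * lor (hv x) N + Real.exp (-s) * lor (hv x) M := by
  rw [← lor_hv, h.1, lor_add_right, lor_smul_right, lor_smul_right]

lemma Ax.pos_left {γ N M} (h : Ax γ N M) (x : UpperHalfPlane) : 0 < lor (hv x) N := by
  have h1 : ∀ s, 1 ≤ Real.exp s * lor (hv x) N + Real.exp (-s) * lor (hv x) M := by
    intro s; rw [← h.cosh]; exact Real.one_le_cosh _
  have h0 : 0 ≤ lor (hv x) N := exp_nonneg_aux _ (lor (hv x) M) fun s => by linarith [h1 s]
  rcases h0.lt_or_eq with h0 | h0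
  · exact h0
  exfalso
  rw [← h0] at h1
  have := exp_nonneg_aux (-1) (lor (hv x) M * lor (hv x) M) fun s => by
    have a := h1 (s / 2)
    have e : Real.exp (-s) = Real.exp (-(s/2)) * Real.exp (-(s/2)) := by
      rw [← Real.exp_add]; ring_nf
    have e2 : Real.exp s * Real.exp (-s) = 1 := by rw [← Real.exp_add]; simp
    have a1 := h1 s
    have hp := Real.exp_pos s
    have a3 : Real.exp s ≤ Real.exp s * (Real.exp (-s) * lor (hv x) M) := by nlinarith
    have a4 : Real.exp s ≤ lor (hv x) M := by rw [← mul_assoc, e2] at a3; linarith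
    have hm := Real.exp_pos (-s)
    nlinarith
  linarith

lemma Ax.pos_right {γ N M} (h : Ax γ N M) (x : UpperHalfPlane) : 0 < lor (hv x) M :=
  h.rev.pos_left x

/-- The projection coordinate. -/
noncomputable def prj (N M : ℝ × ℝ × ℝ) (x : UpperHalfPlane) : ℝ :=
  Real.log (lor (hv x) M / lor (hv x) N) / 2

lemma cosh_le_exp_mul (a b c : ℝ) (ha : 0 ≤ a) (h : a ≤ b + c) (hb : 0 ≤ b) (hc : 0 ≤ c) :
    Real.cosh a ≤ Real.exp b * Real.cosh c := by
  have h1 : Real.cosh a ≤ Real.cosh (b + c) := by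
    rw [Real.cosh_le_cosh, abs_of_nonneg ha, abs_of_nonneg (by linarith)]; exact h
  refine h1.trans ?_
  rw [Real.cosh_eq, Real.cosh_eq, Real.exp_add, neg_add, Real.exp_add]
  have : Real.exp (-b) ≤ Real.exp b := Real.exp_le_exp.2 (by linarith)
  have := Real.exp_pos (-c)
  nlinarith

lemma Ax.left_le {γ N M} (h : Ax γ N M) (x y : UpperHalfPlane) :
    lor (hv x) N ≤ Real.exp (dist x y) * lor (hv y) N := by
  have := exp_nonneg_aux (Real.exp (dist x y) * lor (hv y) N - lor (hv x) N)
    (Real.exp (dist x y) * lor (hv y) M - lor (hv x) M) fun s => by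
      have h1 := cosh_le_exp_mul (dist x (γ s)) (dist x y) (dist y (γ s)) dist_nonneg
        (dist_triangle _ _ _) dist_nonneg dist_nonneg
      rw [h.cosh, h.cosh] at h1
      linarith
  linarith

lemma Ax.prj_le {γ N M} (h : Ax γ N M) (x y : UpperHalfPlane) :
    prj N M x - prj N M y ≤ dist x y := by
  have ax := h.pos_left x
  have bx := h.pos_right x
  have ay := h.pos_left y
  have bY := h.pos_right y
  unfold prj
  rw [Real.log_div bx.ne' ax.ne', Real.log_div bY.ne' ay.ne']
  have h1 := Real.log_le_log ay (h.left_le y x)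
  have h2 := Real.log_le_log bx (h.rev.left_le x y)
  rw [Real.log_mul (Real.exp_pos _).ne' ax.ne', Real.log_exp, dist_comm] at h1
  rw [Real.log_mul (Real.exp_pos _).ne' bY.ne', Real.log_exp] at h2
  linarith

lemma Ax.equivariant {γ N M} (h : Ax γ N M) (g : UpperHalfPlane ≃ᵢ UpperHalfPlane) (l : ℝ)
    (hg : ∀ s, g (γ s) = γ (s + l)) (x : UpperHalfPlane) :
    lor (hv (g x)) N = Real.exp (-l) * lor (hv x) N ∧
    lor (hv (g x)) M = Real.exp l * lor (hv x) M := by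
  have e : ∀ s, Real.exp (s + l) * lor (hv (g x)) N + Real.exp (-(s + l)) * lor (hv (g x)) M
      = Real.exp s * lor (hv x) N + Real.exp (-s) * lor (hv x) M := by
    intro s
    rw [← h.cosh, ← h.cosh, ← hg, g.isometry.dist_eq]
  have e0 := e 0
  have e1 := e 1
  rw [Real.exp_add, neg_add, Real.exp_add] at e0 e1
  simp only [Real.exp_zero, neg_zero, one_mul] at e0
  have hne : Real.exp (-1) < Real.exp 1 := Real.exp_lt_exp.2 (by norm_num)
  have hl : Real.exp l * Real.exp (-l) = 1 := by rw [← Real.exp_add]; simp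
  have k1 : Real.exp l * lor (hv (g x)) N = lor (hv x) N := by
    have : (Real.exp 1 - Real.exp (-1)) * (Real.exp l * lor (hv (g x)) N - lor (hv x) N) = 0 := by
      linear_combination e1 - Real.exp (-1) * e0
    rcases mul_eq_zero.1 this with h | h <;> linarith
  have k2 : Real.exp (-l) * lor (hv (g x)) M = lor (hv x) M := by linarith
  constructor
  · rw [← k1]; linear_combination -lor (hv (g x)) N * hl
  · rw [← k2]; linear_combination -lor (hv (g x)) M * hl

lemma Ax.prj_map {γ N M} (h : Ax γ N M) (g : UpperHalfPlane ≃ᵢ UpperHalfPlane) (l : ℝ)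
    (hg : ∀ s, g (γ s) = γ (s + l)) (x : UpperHalfPlane) :
    prj N M (g x) = prj N M x + l := by
  have ax := h.pos_left x
  have bx := h.pos_right x
  obtain ⟨h1, h2⟩ := h.equivariant g l hg x
  have := Real.exp_pos l
  have := Real.exp_pos (-l)
  unfold prj
  rw [h1, h2, Real.log_div (by positivity) (by positivity), Real.log_div (by positivity)
    (by positivity), Real.log_mul (by positivity) (by positivity), Real.log_mul (by positivity)
    (by positivity), Real.log_exp, Real.log_exp]
  ring

lemma exists_geod (x y : UpperHalfPlane) (hxy : 0 < dist x y) (t : ℝ) (ht0 : 0 ≤ t)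
    (ht1 : t ≤ dist x y) : ∃ z, dist x z = t ∧ dist z y = dist x y - t ∧
      Real.sinh (dist x y) • hv z = Real.sinh (dist x y - t) • hv x + Real.sinh t • hv y := by
  obtain ⟨D, hD⟩ : ∃ D, D = dist x y := ⟨_, rfl⟩
  rw [← hD] at hxy ht1 ⊢
  have hS : 0 < Real.sinh D := Real.sinh_pos_iff.2 hxy
  have h1 : 0 ≤ Real.sinh t := Real.sinh_nonneg_iff.2 ht0
  have h2 : 0 ≤ Real.sinh (D - t) := Real.sinh_nonneg_iff.2 (by linarith)
  have hxyv : lor (hv x) (hv y) = Real.cosh D := by rw [lor_hv, hD]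
  have hyxv : lor (hv y) (hv x) = Real.cosh D := by rw [lor_symm, hxyv]
  have cD := Real.cosh_sq D
  have ct := Real.cosh_sq t
  have es : Real.sinh (D - t) = _ := Real.sinh_sub D t
  have ec : Real.cosh (D - t) = _ := Real.cosh_sub D t
  obtain ⟨u, hu⟩ : ∃ u, u = (1 / Real.sinh D) •
    (Real.sinh (D - t) • hv x + Real.sinh t • hv y) := ⟨_, rfl⟩
  have hux : lor (hv x) u = Real.cosh t := by
    rw [hu, lor_smul_right, lor_add_right, lor_smul_right, lor_smul_right, lor_hv_self, hxyv, es]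
    field_simp; ring
  have huy : lor u (hv y) = Real.cosh (D - t) := by
    rw [hu, lor_smul_left, lor_add_left, lor_smul_left, lor_smul_left, lor_hv_self, hxyv, es, ec]
    field_simp
    linear_combination -Real.sinh t * cD
  have huu : lor u u = 1 := by
    nth_rw 1 [hu]
    rw [lor_smul_left, lor_add_left, lor_smul_left, lor_smul_left, hux, lor_symm (hv y), huy, es,
      ec]
    field_simp
    linear_combination Real.sinh D * ct
  have hpos : 0 < u.2.2 := by
    rw [hu]
    simp only [Prod.smul_snd, Prod.snd_add, smul_eq_mul, hv]
    have := x.im_pos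
    have := y.im_pos
    rcases h1.lt_or_eq with h1 | h1
    · positivity
    · have : t = 0 := by rw [← Real.sinh_eq_zero]; exact h1.symm
      subst this
      simp only [sub_zero, Real.sinh_zero, zero_mul, add_zero]
      positivity
  obtain ⟨z, hz⟩ := exists_hv u huu hpos
  refine ⟨z, ?_, ?_, ?_⟩
  · rw [← hz, lor_hv] at hux
    have := congrArg Real.arcosh hux
    rwa [Real.arcosh_cosh dist_nonneg, Real.arcosh_cosh ht0] at this
  · rw [← hz, lor_hv] at huy
    have := congrArg Real.arcosh huy
    rwa [Real.arcosh_cosh dist_nonneg, Real.arcosh_cosh (by linarith)] at this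
  · rw [hz, hu, smul_smul, mul_one_div_cancel hS.ne', one_smul]

lemma Ax.prj_le_iff {γ N M} (h : Ax γ N M) (x : UpperHalfPlane) (c : ℝ) :
    prj N M x ≤ c ↔ lor (hv x) M ≤ Real.exp (2 * c) * lor (hv x) N := by
  have ax := h.pos_left x
  have bx := h.pos_right x
  unfold prj
  rw [div_le_iff₀ two_pos, Real.log_le_iff_le_exp (by positivity), div_le_iff₀ ax, mul_comm c]

lemma Ax.le_prj_iff {γ N M} (h : Ax γ N M) (x : UpperHalfPlane) (c : ℝ) :
    c ≤ prj N M x ↔ Real.exp (2 * c) * lor (hv x) N ≤ lor (hv x) M := by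
  have ax := h.pos_left x
  have bx := h.pos_right x
  unfold prj
  rw [le_div_iff₀ two_pos, Real.le_log_iff_exp_le (by positivity), le_div_iff₀ ax, mul_comm c]

lemma Ax.ivt {γ N M} (h : Ax γ N M) (x y : UpperHalfPlane) (c : ℝ) (hx : prj N M x ≤ c)
    (hy : c ≤ prj N M y) : ∃ z, prj N M z = c ∧ dist x z + dist z y = dist x y := by
  rcases (dist_nonneg (x := x) (y := y)).eq_or_lt with h0 | h0
  · have : x = y := dist_eq_zero.1 h0.symm
    subst this
    exact ⟨x, le_antisymm hx hy, by simp⟩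
  rw [h.prj_le_iff] at hx
  rw [h.le_prj_iff] at hy
  obtain ⟨D, hD⟩ : ∃ D, D = dist x y := ⟨_, rfl⟩
  have hS : 0 < Real.sinh D := Real.sinh_pos_iff.2 (by rw [hD]; exact h0)
  obtain ⟨t, ⟨t0, t1⟩, ht⟩ := intermediate_value_Icc (f := fun t =>
    Real.sinh (D - t) * (lor (hv x) M - Real.exp (2 * c) * lor (hv x) N) +
    Real.sinh t * (lor (hv y) M - Real.exp (2 * c) * lor (hv y) N)) (a := 0) (b := D)
    (by rw [hD]; exact h0.le)
    (by fun_prop) (show (0 : ℝ) ∈ _ from by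
      simp only [sub_zero, Real.sinh_zero, zero_mul, add_zero, sub_self, zero_add]
      exact ⟨by nlinarith, by nlinarith⟩)
  obtain ⟨z, z1, z2, z3⟩ := exists_geod x y h0 t t0 (by rw [← hD]; exact t1)
  refine ⟨z, ?_, by rw [z1, z2]; ring⟩
  have e : lor (hv z) M - Real.exp (2 * c) * lor (hv z) N = 0 := by
    rw [← hD] at z3
    have eM := congrArg (fun v => lor v M) z3
    have eN := congrArg (fun v => lor v N) z3
    simp only [lor_smul_left, lor_add_left] at eM eN ht
    have : Real.sinh D * (lor (hv z) M - Real.exp (2 * c) * lor (hv z) N) = 0 := by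
      linear_combination eM - Real.exp (2 * c) * eN + ht
    exact (mul_eq_zero.1 this).resolve_left (ne_of_gt hS)
  exact le_antisymm ((h.prj_le_iff _ _).2 (by linarith)) ((h.le_prj_iff _ _).2 (by linarith))

/-- Completeness relation for the frame of an axis. -/
lemma Ax.lor_eq {γ N M} (h : Ax γ N M) (u w : ℝ × ℝ × ℝ) :
    lor u w = 2 * (lor u N * lor w M + lor u M * lor w N) - det3 N M u * det3 N M w := by
  obtain ⟨-, h2, h3, h4⟩ := h
  rw [gram3, lor_symm M N, h2, h3, h4, lor_symm N w, lor_symm M w]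
  ring

lemma Ax.cosh_sq_map {γ N M} (h : Ax γ N M) (g : UpperHalfPlane ≃ᵢ UpperHalfPlane) (l : ℝ)
    (hg : ∀ s, g (γ s) = γ (s + l)) (x : UpperHalfPlane) :
    Real.cosh (dist x (g (g x))) =
      1 + 8 * (lor (hv x) N * lor (hv x) M) * Real.sinh l ^ 2 := by
  obtain ⟨a1, b1⟩ := h.equivariant g l hg x
  obtain ⟨a2, b2⟩ := h.equivariant g l hg (g x)
  have e2 : Real.exp l * Real.exp (-l) = 1 := by rw [← Real.exp_add]; simp
  have q0 := h.lor_eq (hv x) (hv x)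
  have q1 := h.lor_eq (hv (g x)) (hv (g x))
  have q2 := h.lor_eq (hv (g (g x))) (hv (g (g x)))
  have p1 := h.lor_eq (hv x) (hv (g x))
  have p2 := h.lor_eq (hv (g x)) (hv (g (g x)))
  have p3 := h.lor_eq (hv x) (hv (g (g x)))
  rw [lor_hv_self] at q0 q1 q2
  rw [lor_hv] at p1 p2 p3
  rw [g.isometry.dist_eq] at p2
  rw [a2, b2, a1, b1] at q2 p2 p3
  rw [a1, b1] at q1 p1
  set a := lor (hv x) N
  set b := lor (hv x) M
  set σ := det3 N M (hv x)
  set σ' := det3 N M (hv (g x))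
  set σ'' := det3 N M (hv (g (g x)))
  rw [p3, Real.sinh_eq]
  set E := Real.exp l
  set F := Real.exp (-l)
  have k0 : σ * σ = 4 * a * b - 1 := by linarith
  have k1 : σ' * σ' = 4 * a * b - 1 := by linear_combination q1 + 4 * a * b * e2
  have k2 : σ'' * σ'' = 4 * a * b - 1 := by
    linear_combination q2 + 4 * a * b * (E * F + 1) * e2
  have k3 : σ' * (σ - σ'') = 0 := by
    linear_combination p1 - p2 + 2 * a * b * (E + F) * (- e2)
  have k4 : σ * σ'' = 4 * a * b - 1 := by
    rcases mul_eq_zero.1 k3 with h | h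
    · rw [h] at k1
      have : σ = 0 := by
        have : σ * σ = 0 := by linarith
        exact mul_self_eq_zero.1 this
      rw [this]; linarith
    · have : σ = σ'' := by linarith
      rw [← this, k0]
  linear_combination -k4 + 4 * a * b * e2

lemma Ax.sub_tube {γ N M} (h : Ax γ N M) (g : UpperHalfPlane ≃ᵢ UpperHalfPlane) (l : ℝ)
    (hg : ∀ s, g (γ s) = γ (s + l)) (hl : 0 < l) (ε : ℝ) (hε : 0 < ε) (hlε : l ≤ ε / 10)
    (m : ℕ) (hm : 1 ≤ m) (hm2 : ε / 10 < ((m : ℝ) + 1) * l) (hγ : Isometry γ)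
    (x : UpperHalfPlane)
    (hx : 4 * (lor (hv x) N * lor (hv x) M) ≤ (max 1 (Real.sinh (ε / 20) / Real.sinh l)) ^ 2) :
    ∃ i ∈ Finset.Icc 1 m, dist x ((g ^ i) x) ≤ ε := by
  have hsl : 0 < Real.sinh l := Real.sinh_pos_iff.2 hl
  have ax := h.pos_left x
  have bx := h.pos_right x
  rcases hm.eq_or_lt with h1 | h1
  · refine ⟨1, by simp [hm], ?_⟩
    subst h1
    have hlt : Real.sinh (ε / 20) ≤ Real.sinh l := Real.sinh_le_sinh.2 (by
      norm_num at hm2; linarith)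
    rw [max_eq_left ((div_le_one hsl).2 hlt)] at hx
    have hd := h.cosh x (prj N M x)
    have ee : Real.exp (2 * prj N M x) = lor (hv x) M / lor (hv x) N := by
      unfold prj
      rw [mul_div_cancel₀ _ (by norm_num), Real.exp_log (by positivity)]
    set a := lor (hv x) N
    set b := lor (hv x) M
    set p := prj N M x
    have e1 : Real.exp p * Real.exp p = b / a := by rw [← ee, ← Real.exp_add]; ring_nf
    have e2 : Real.exp p * Real.exp (-p) = 1 := by rw [← Real.exp_add]; simp
    have e3 : Real.exp (-p) * Real.exp (-p) * b = a := by
      have : Real.exp p * Real.exp p * a = b := by rw [e1]; field_simp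
      rw [← this]
      linear_combination (Real.exp p * Real.exp (-p) + 1) * a * e2
    have e4 : Real.exp p * Real.exp p * a = b := by rw [e1]; field_simp
    have hsq : Real.cosh (dist x (γ p)) ^ 2 ≤ 1 := by
      have : Real.cosh (dist x (γ p)) ^ 2 = 4 * (a * b) := by
        rw [hd]; linear_combination a * e4 + b * e3 + 2 * a * b * e2
      rw [this]; linarith
    have hc1 := Real.one_le_cosh (dist x (γ p))
    have : Real.cosh (dist x (γ p)) = 1 := by nlinarith
    have hd0 : dist x (γ p) = 0 := by
      have := congrArg Real.arcosh this
      rwa [Real.arcosh_cosh dist_nonneg, Real.arcosh_zero] at this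
    have hxe : x = γ p := dist_eq_zero.1 hd0
    rw [pow_one, hxe, hg, hγ.dist_eq, Real.dist_eq, abs_le]
    constructor <;> linarith
  · refine ⟨2, by simp; omega, ?_⟩
    have : (g ^ 2) x = g (g x) := by rw [pow_two]; rfl
    rw [this]
    have hs2 : max 1 (Real.sinh (ε / 20) / Real.sinh l) * Real.sinh l ≤ Real.sinh (ε / 2) := by
      rw [max_mul_of_nonneg _ _ hsl.le, one_mul, div_mul_cancel₀ _ hsl.ne']
      exact max_le (Real.sinh_le_sinh.2 (by linarith)) (Real.sinh_le_sinh.2 (by linarith))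
    have hK : 0 ≤ max 1 (Real.sinh (ε / 20) / Real.sinh l) := le_max_of_le_left zero_le_one
    set K := max 1 (Real.sinh (ε / 20) / Real.sinh l)
    have hc := h.cosh_sq_map g l hg x
    have he : Real.cosh ε = 1 + 2 * Real.sinh (ε / 2) ^ 2 := by
      have := Real.cosh_two_mul (ε / 2)
      rw [mul_div_cancel₀ _ (by norm_num)] at this
      rw [this, Real.cosh_sq]; ring
    have h5 : (K * Real.sinh l) ^ 2 ≤ Real.sinh (ε / 2) ^ 2 :=
      pow_le_pow_left₀ (by positivity) hs2 2
    have h6 : Real.cosh (dist x (g (g x))) ≤ Real.cosh ε := by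
      rw [hc, he]
      nlinarith [sq_nonneg (Real.sinh l)]
    rw [Real.cosh_le_cosh, abs_of_nonneg dist_nonneg, abs_of_pos hε] at h6
    exact h6

lemma Ax.cross_nonneg {γ N M γ' N' M'} (h : Ax γ N M) (h' : Ax γ' N' M') : 0 ≤ lor N N' := by
  apply exp_nonneg_aux _ (lor M N')
  intro s
  have := (h'.pos_left (γ s)).le
  rwa [h.1, lor_add_left, lor_smul_left, lor_smul_left] at this

lemma Ax.cross_pos {γ N M γ' N' M'} (h : Ax γ N M) (h' : Ax γ' N' M') (L : ℝ) (hL : 0 < L)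
    (hd : ∀ s t, L ≤ dist (γ s) (γ' t)) : 0 < lor N N' := by
  rcases (h.cross_nonneg h').lt_or_eq with h0 | h0
  · exact h0
  exfalso
  obtain ⟨q, hq⟩ : ∃ q, q = 2 * lor N' M := ⟨_, rfl⟩
  have hN' : N' = q • N := by
    rw [← sub_eq_zero]
    have uN : lor (N' - q • N) N = 0 := by
      rw [lor_sub_left, lor_smul_left, h.2.1, lor_symm N' N, ← h0]; ring
    have uM : lor (N' - q • N) M = 0 := by
      rw [lor_sub_left, lor_smul_left, h.2.2.2, hq]; ring
    apply lor_eq_zero _ (γ 0)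
    · rw [lor_sub_right, lor_smul_right, uN, lor_sub_left, h'.2.1, lor_smul_left, ← h0]; simp
    · rw [h.1, lor_add_right, lor_smul_right, lor_smul_right, uN, uM]; simp
  have hq0 : 0 ≤ q := by
    have := h'.cross_nonneg h.rev
    linarith
  have hc := h'.2.2.2
  rw [hN', lor_smul_left] at hc
  have hqp : 0 < q := by
    rcases hq0.lt_or_eq with h | h
    · exact h
    · rw [← h] at hc; norm_num at hc
  have hL1 : 1 < Real.cosh L := Real.one_lt_cosh.2 hL.ne'
  have := exp_nonneg_aux (-(Real.cosh L - 1)) (lor M M' / q) fun t => by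
    have h1 := hd (t + Real.log q) (t)
    have h2 : Real.cosh L ≤ Real.cosh (dist (γ (t + Real.log q)) (γ' (t))) := by
      rw [Real.cosh_le_cosh, abs_of_pos hL, abs_of_nonneg dist_nonneg]; exact h1
    rw [← lor_hv, h.1, h'.1] at h2
    simp only [lor_add_left, lor_add_right, lor_smul_left, lor_smul_right, ← h0] at h2
    rw [Real.exp_add, neg_add, Real.exp_add, Real.exp_neg (Real.log q), Real.exp_log hqp] at h2
    have hMN' : lor M N' = q / 2 := by rw [lor_symm]; linarith
    have hNM' : lor N M' = 1 / (2 * q) := by field_simp; linarith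
    rw [hMN', hNM'] at h2
    have e2 : Real.exp t * Real.exp (-t) = 1 := by rw [← Real.exp_add]; simp
    have h3 : Real.cosh L ≤ 1 + Real.exp (-t) * Real.exp (-t) * (lor M M' / q) := by
      refine h2.trans_eq ?_
      field_simp; linear_combination 2 * q * e2
    have h4 := mul_le_mul_of_nonneg_left h3 (Real.exp_pos t).le
    have h5 : Real.exp t * (1 + Real.exp (-t) * Real.exp (-t) * (lor M M' / q)) =
        Real.exp t + Real.exp (-t) * (lor M M' / q) := by
      linear_combination Real.exp (-t) * (lor M M' / q) * e2
    linarith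
  linarith

lemma Ax.balance {γ N M γ' N' M'} (h : Ax γ N M) (h' : Ax γ' N' M') (L : ℝ) (hL : 0 < L)
    (hd : ∀ s t, L ≤ dist (γ s) (γ' t)) : ∃ s t : ℝ,
    lor (Real.exp s • N) (Real.exp t • N') = lor (Real.exp (-s) • M) (Real.exp (-t) • M') ∧
    lor (Real.exp s • N) (Real.exp (-t) • M') = lor (Real.exp (-s) • M) (Real.exp t • N') := by
  have c1 := h.cross_pos h' L hL hd
  have c2 := h.cross_pos h'.rev L hL fun s t => hd _ _
  have c3 := h.rev.cross_pos h' L hL fun s t => hd _ _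
  have c4 := h.rev.cross_pos h'.rev L hL fun s t => hd _ _
  obtain ⟨α, hα⟩ : ∃ α, α = Real.log (lor M M' / lor N N') := ⟨_, rfl⟩
  obtain ⟨β, hβ⟩ : ∃ β, β = Real.log (lor M N' / lor N M') := ⟨_, rfl⟩
  have eα : Real.exp α = lor M M' / lor N N' := by rw [hα, Real.exp_log (by positivity)]
  have eβ : Real.exp β = lor M N' / lor N M' := by rw [hβ, Real.exp_log (by positivity)]
  refine ⟨(α + β) / 4, (α - β) / 4, ?_, ?_⟩
  · simp only [lor_smul_left, lor_smul_right]
    rw [← mul_assoc, ← mul_assoc, ← Real.exp_add, ← Real.exp_add]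
    have e1 : (α - β) / 4 + (α + β) / 4 = α + (-((α - β) / 4) + -((α + β) / 4)) := by ring
    rw [e1, Real.exp_add, eα]
    field_simp
  · simp only [lor_smul_left, lor_smul_right]
    rw [← mul_assoc, ← mul_assoc, ← Real.exp_add, ← Real.exp_add]
    have e1 : -((α - β) / 4) + (α + β) / 4 = β + ((α - β) / 4 + -((α + β) / 4)) := by ring
    rw [e1, Real.exp_add, eβ]
    field_simp

lemma Ax.hv_zero {γ N M} (h : Ax γ N M) : hv (γ 0) = N + M := by
  rw [h.1]; simp

lemma Ax.four_mul {γ N M} (h : Ax γ N M) (z : UpperHalfPlane)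
    (hz : lor (hv z) N = lor (hv z) M) :
    4 * (lor (hv z) N * lor (hv z) M) = Real.cosh (dist z (γ 0)) ^ 2 := by
  rw [h.cosh]; simp only [Real.exp_zero, neg_zero]; rw [hz]; ring

lemma Ax.zero_eq {γ N M} (h : Ax γ N M) : lor (hv (γ 0)) N = lor (hv (γ 0)) M := by
  rw [h.hv_zero, lor_add_left, lor_add_left, h.2.1, h.2.2.1, lor_symm M N]; ring

lemma Ax.zero_eq' {N M γ' N' M'} (h' : Ax γ' N' M')
    (b1 : lor N N' = lor M M') (b2 : lor N M' = lor M N') :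
    lor (hv (γ' 0)) N = lor (hv (γ' 0)) M := by
  rw [h'.hv_zero, lor_add_left, lor_add_left, lor_symm N' N, lor_symm M' N, lor_symm N' M,
    lor_symm M' M]
  linarith

lemma Ax.bridge {γ N M γ' N' M'} (h : Ax γ N M) (h' : Ax γ' N' M') (L : ℝ) (hL : 0 < L)
    (b1 : lor N N' = lor M M') (b2 : lor N M' = lor M N') (K : ℝ) (hK : 1 ≤ K)
    (hd : ∀ x y, 4 * (lor (hv x) N * lor (hv x) M) ≤ K ^ 2 →
      4 * (lor (hv y) N' * lor (hv y) M') ≤ K ^ 2 → L ≤ dist x y) :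
    K * Real.cosh (L / 2) ≤ Real.cosh (dist (γ 0) (γ' 0) / 2) := by
  have hp := h.zero_eq
  have hp' : lor (hv (γ 0)) N' = lor (hv (γ 0)) M' :=
    h.zero_eq' (by rw [lor_symm, b1, lor_symm]) (by rw [lor_symm, ← b2, lor_symm])
  have hq' := h'.zero_eq
  have hq := h'.zero_eq' b1 b2
  have hK2 : 1 ≤ K ^ 2 := one_le_pow₀ hK
  have hD : 0 < dist (γ 0) (γ' 0) := by
    refine lt_of_lt_of_le hL (hd _ _ ?_ ?_)
    · rw [h.four_mul _ hp]; simpa using hK2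
    · rw [h'.four_mul _ hq']; simpa using hK2
  obtain ⟨D, hDe⟩ : ∃ D, D = dist (γ 0) (γ' 0) := ⟨_, rfl⟩
  rw [← hDe] at hD ⊢
  have hR := Real.arcosh_nonneg hK
  have hcR := Real.cosh_arcosh hK
  set R := Real.arcosh K
  obtain ⟨t, ht⟩ : ∃ t, t = min R (D / 2) := ⟨_, rfl⟩
  have ht0 : 0 ≤ t := by rw [ht]; exact le_min hR (by linarith)
  have htR : t ≤ R := by rw [ht]; exact min_le_left _ _
  have htD : t ≤ D / 2 := by rw [ht]; exact min_le_right _ _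
  have hct : Real.cosh t ^ 2 ≤ K ^ 2 := by
    rw [← hcR]
    refine pow_le_pow_left₀ (Real.cosh_pos _).le ?_ 2
    rw [Real.cosh_le_cosh, abs_of_nonneg ht0, abs_of_nonneg hR]; exact htR
  obtain ⟨z, z1, z2, z3⟩ := exists_geod (γ 0) (γ' 0) (by rw [← hDe]; exact hD) t ht0
    (by rw [← hDe]; linarith)
  rw [← hDe] at z2 z3
  have span : ∀ (n m : ℝ × ℝ × ℝ) (x y z : UpperHalfPlane) (a b c : ℝ), 0 < a →
      a • hv z = b • hv x + c • hv y → lor (hv x) n = lor (hv x) m → lor (hv y) n = lor (hv y) m →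
      lor (hv z) n = lor (hv z) m := by
    intro n m x y z a b c ha e ex ey
    have en := congrArg (fun v => lor v n) e
    have em := congrArg (fun v => lor v m) e
    simp only [lor_add_left, lor_smul_left, ex, ey] at en em
    exact mul_left_cancel₀ ha.ne' (en.trans em.symm)
  have hz := span N M _ _ _ _ _ _ (Real.sinh_pos_iff.2 hD) z3 hp hq
  have hz' := span N' M' _ _ _ _ _ _ (Real.sinh_pos_iff.2 hD) z3 hp' hq'
  have hzq : 0 < dist z (γ' 0) := by rw [z2]; linarith
  obtain ⟨y, y1, y2, y3⟩ := exists_geod z (γ' 0) hzq (D - 2 * t) (by linarith)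
    (by rw [z2]; linarith)
  have hy' := span N' M' _ _ _ _ _ _ (Real.sinh_pos_iff.2 hzq) y3 hz' hq'
  have hLd := hd z y (by rw [h.four_mul _ hz, dist_comm, z1]; exact hct)
    (by rw [h'.four_mul _ hy', y2, z2]; ring_nf; linarith)
  rw [y1] at hLd
  have htR' : t = R := by
    rcases min_choice R (D / 2) with h | h
    · rw [ht, h]
    · exfalso; rw [h] at ht; linarith
  have h1 : Real.cosh (R + L / 2) ≤ Real.cosh (D / 2) := by
    rw [Real.cosh_le_cosh, abs_of_nonneg (by linarith), abs_of_nonneg (by linarith)]; linarith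
  rw [Real.cosh_add, hcR] at h1
  have := mul_nonneg (Real.sinh_nonneg_iff.2 hR) (Real.sinh_nonneg_iff.2 (half_pos hL).le)
  linarith

lemma eq_zero_of_orth (p τ q u : ℝ × ℝ × ℝ) (hdet : det3 p τ q ≠ 0) (h1 : lor p u = 0)
    (h2 : lor τ u = 0) (h3 : lor q u = 0) : u = 0 := by
  have key : ∀ y z, det3 u y z = 0 := by
    intro y z
    have := gram3 p τ q u y z
    rw [h1, h2, h3] at this
    have h0 : det3 p τ q * det3 u y z = 0 := by rw [this]; ring
    exact (mul_eq_zero.1 h0).resolve_left hdet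
  have k1 := key (0, 1, 0) (0, 0, 1)
  have k2 := key (1, 0, 0) (0, 0, 1)
  have k3 := key (1, 0, 0) (0, 1, 0)
  simp [det3] at k1 k2 k3
  ext <;> simp [k1, k2, k3]

lemma Ax.tau_sq {γ N M γ' N' M'} (h : Ax γ N M) (h' : Ax γ' N' M')
    (b1 : lor N N' = lor M M') (b2 : lor N M' = lor M N') (hD : 0 < dist (γ 0) (γ' 0))
    (x : ℝ × ℝ × ℝ) : lor x (N' - M') ^ 2 = lor x (N - M) ^ 2 := by
  have hp := h.zero_eq
  have hp' : lor (hv (γ 0)) N' = lor (hv (γ 0)) M' :=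
    h.zero_eq' (by rw [lor_symm, b1, lor_symm]) (by rw [lor_symm, ← b2, lor_symm])
  have hq' := h'.zero_eq
  have hq := h'.zero_eq' b1 b2
  have tt : lor (N - M) (N - M) = -1 := by
    simp only [lor_sub_left, lor_sub_right, h.2.1, h.2.2.1, h.2.2.2, lor_symm M N]; norm_num
  have tt' : lor (N' - M') (N' - M') = -1 := by
    simp only [lor_sub_left, lor_sub_right, h'.2.1, h'.2.2.1, h'.2.2.2, lor_symm M' N']; norm_num
  have pt : lor (hv (γ 0)) (N - M) = 0 := by rw [lor_sub_right, hp, sub_self]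
  have pt' : lor (hv (γ 0)) (N' - M') = 0 := by rw [lor_sub_right, hp', sub_self]
  have qt : lor (hv (γ' 0)) (N - M) = 0 := by rw [lor_sub_right, hq, sub_self]
  have qt' : lor (hv (γ' 0)) (N' - M') = 0 := by rw [lor_sub_right, hq', sub_self]
  generalize N - M = τ at *
  generalize N' - M' = τ' at *
  have hc : 1 < Real.cosh (dist (γ 0) (γ' 0)) := Real.one_lt_cosh.2 hD.ne'
  have hdet : det3 (hv (γ 0)) τ (hv (γ' 0)) ≠ 0 := by
    intro h0
    have := gram3 (hv (γ 0)) τ (hv (γ' 0)) (hv (γ 0)) τ (hv (γ' 0))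
    rw [h0, lor_hv_self, lor_hv_self, tt, lor_symm τ, lor_symm τ, pt, qt,
      lor_symm (hv (γ' 0)) (hv (γ 0)), lor_hv] at this
    nlinarith
  have hu := eq_zero_of_orth _ _ _ (τ' + lor τ τ' • τ) hdet
    (by rw [lor_add_right, lor_smul_right, pt, pt']; ring)
    (by rw [lor_add_right, lor_smul_right, tt]; ring)
    (by rw [lor_add_right, lor_smul_right, qt, qt']; ring)
  obtain ⟨k, hk⟩ : ∃ k, k = lor τ τ' := ⟨_, rfl⟩
  rw [← hk] at hu
  have hτ' : τ' = (-k) • τ := by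
    have h0 := eq_neg_of_add_eq_zero_left hu
    rw [h0]; module
  rw [hτ', lor_smul_left, lor_smul_right, tt] at tt'
  rw [hτ', lor_smul_right]
  linear_combination -lor x τ ^ 2 * tt'

lemma Ax.abs_prj {γ N M} (h : Ax γ N M) (x : UpperHalfPlane) (w : ℝ)
    (hw : w ≤ |prj N M x|) :
    Real.sinh w * lor (hv x) (N + M) ≤ Real.cosh w * |lor (hv x) (N - M)| := by
  rw [lor_add_right, lor_sub_right]
  have e2 : Real.exp w * Real.exp (-w) = 1 := by rw [← Real.exp_add]; simp
  have e3 : Real.exp (2 * w) = Real.exp w * Real.exp w := by rw [← Real.exp_add]; ring_nf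
  have e4 : Real.exp (2 * -w) = Real.exp (-w) * Real.exp (-w) := by rw [← Real.exp_add]; ring_nf
  have ep := Real.exp_pos w
  have em := Real.exp_pos (-w)
  have hc := Real.cosh_pos w
  rcases le_abs.1 hw with h1 | h1
  · rw [h.le_prj_iff, e3] at h1
    have h2 := mul_le_mul_of_nonneg_left h1 em.le
    have h3 : Real.exp w * lor (hv x) N ≤ Real.exp (-w) * lor (hv x) M := by
      refine le_trans (le_of_eq ?_) h2
      linear_combination -Real.exp w * lor (hv x) N * e2
    have h4 := mul_le_mul_of_nonneg_left (neg_abs_le (lor (hv x) N - lor (hv x) M)) hc.le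
    rw [Real.cosh_eq] at *
    rw [Real.sinh_eq]
    linarith
  · have h1 : prj N M x ≤ -w := by linarith
    rw [h.prj_le_iff, e4] at h1
    have h2 := mul_le_mul_of_nonneg_left h1 ep.le
    have h3 : Real.exp w * lor (hv x) M ≤ Real.exp (-w) * lor (hv x) N := by
      refine le_trans h2 (le_of_eq ?_)
      linear_combination Real.exp (-w) * lor (hv x) N * e2
    have h4 := mul_le_mul_of_nonneg_left (le_abs_self (lor (hv x) N - lor (hv x) M)) hc.le
    rw [Real.cosh_eq] at *
    rw [Real.sinh_eq]
    linarith

lemma Ax.separation {γ N M γ' N' M'} (h : Ax γ N M) (h' : Ax γ' N' M')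
    (b1 : lor N N' = lor M M') (b2 : lor N M' = lor M N') (hD : 0 < dist (γ 0) (γ' 0))
    (w : ℝ) (hw : 0 < w)
    (hC : Real.cosh w ≤ Real.sinh w * Real.cosh (dist (γ 0) (γ' 0) / 2))
    (x : UpperHalfPlane) : |prj N M x| < w ∨ |prj N' M' x| < w := by
  by_contra! hcon
  have k1 := h.abs_prj x w hcon.1
  have k2 := h'.abs_prj x w hcon.2
  have k3 := h.tau_sq h' b1 b2 hD (hv x)
  have k4 : |lor (hv x) (N' - M')| = |lor (hv x) (N - M)| := (sq_eq_sq_iff_abs_eq_abs _ _).1 k3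
  rw [k4] at k2
  rw [← h.hv_zero, lor_hv] at k1
  rw [← h'.hv_zero, lor_hv] at k2
  have tt : lor (N - M) (N - M) = -1 := by
    simp only [lor_sub_left, lor_sub_right, h.2.1, h.2.2.1, h.2.2.2, lor_symm M N]; norm_num
  have pt : lor (hv (γ 0)) (N - M) = 0 := by rw [lor_sub_right, h.zero_eq, sub_self]
  have qt : lor (hv (γ' 0)) (N - M) = 0 := by
    rw [lor_sub_right, h'.zero_eq' b1 b2, sub_self]
  generalize N - M = τ at *
  have gr := gram3 (hv (γ 0) + hv (γ' 0)) τ (hv x) (hv (γ 0) + hv (γ' 0)) τ (hv x)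
  have mt : lor (hv (γ 0) + hv (γ' 0)) τ = 0 := by rw [lor_add_left, pt, qt, add_zero]
  have c2 : Real.cosh (dist (γ 0) (γ' 0)) = 2 * Real.cosh (dist (γ 0) (γ' 0) / 2) ^ 2 - 1 := by
    have := Real.cosh_two_mul (dist (γ 0) (γ' 0) / 2)
    rw [mul_div_cancel₀ _ (by norm_num)] at this
    rw [this, Real.sinh_sq]; ring
  have mm : lor (hv (γ 0) + hv (γ' 0)) (hv (γ 0) + hv (γ' 0)) =
      4 * Real.cosh (dist (γ 0) (γ' 0) / 2) ^ 2 := by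
    simp only [lor_add_left, lor_add_right, lor_hv_self, lor_symm (hv (γ' 0)) (hv (γ 0)), lor_hv]
    rw [c2]; ring
  have xm : lor (hv x) (hv (γ 0) + hv (γ' 0)) =
      Real.cosh (dist x (γ 0)) + Real.cosh (dist x (γ' 0)) := by
    rw [lor_add_right, lor_hv, lor_hv]
  rw [lor_symm τ (hv (γ 0) + hv (γ' 0)), lor_symm τ (hv x), mt, tt,
    lor_symm (hv (γ 0) + hv (γ' 0)) (hv x), xm, mm, lor_hv_self] at gr
  have gr0 := mul_self_nonneg (det3 (hv (γ 0) + hv (γ' 0)) τ (hv x))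
  rw [gr] at gr0
  have hS1 := Real.cosh_pos (dist x (γ 0))
  have hS2 := Real.cosh_pos (dist x (γ' 0))
  have hCp := Real.cosh_pos (dist (γ 0) (γ' 0) / 2)
  have hT2 := sq_abs (lor (hv x) τ)
  have hT0 := abs_nonneg (lor (hv x) τ)
  have hsw : 0 < Real.sinh w := Real.sinh_pos_iff.2 hw
  obtain ⟨S, hS⟩ : ∃ S, S = Real.cosh (dist x (γ 0)) + Real.cosh (dist x (γ' 0)) := ⟨_, rfl⟩
  rw [← hS] at gr0
  generalize Real.cosh (dist (γ 0) (γ' 0) / 2) = C at *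
  generalize |lor (hv x) τ| = T at *
  have h5 : 2 * C * T < S := by
    apply lt_of_pow_lt_pow_left₀ 2 (by linarith)
    nlinarith [pow_pos hCp 2]
  have h6 : Real.sinh w * S ≤ 2 * (Real.cosh w * T) := by rw [hS]; linarith
  have h7 : Real.cosh w * T ≤ Real.sinh w * C * T := mul_le_mul_of_nonneg_right hC hT0
  have h8 := mul_lt_mul_of_pos_left h5 hsw
  linarith

lemma const_bound (ε l c : ℝ) (hl : 0 < l) (hlε : l ≤ ε / 10)
    (hc : max 1 (Real.sinh (ε / 20) / Real.sinh l) *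
      Real.cosh (16 * Real.cosh ε ^ 3 / Real.sinh (ε / 20) / 2) ≤ c) :
    Real.cosh (l / 4) ≤ Real.sinh (l / 4) * c := by
  have hκ : 0 < Real.sinh (ε / 20) := Real.sinh_pos_iff.2 (by linarith)
  have hsl : 0 < Real.sinh l := Real.sinh_pos_iff.2 hl
  have hsw : 0 < Real.sinh (l / 4) := Real.sinh_pos_iff.2 (by linarith)
  have hcw := Real.cosh_pos (l / 4)
  have hcw2 := Real.cosh_pos (l / 2)
  have hcε := Real.cosh_pos ε
  set κ := Real.sinh (ε / 20)
  set X := 16 * Real.cosh ε ^ 3 / κ / 2 with hX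
  have hXp : 0 < X := by positivity
  have hcX : X / 2 ≤ Real.cosh X := by
    rw [Real.cosh_eq]
    have := Real.add_one_le_exp X
    have := Real.exp_pos (-X)
    linarith
  have h1 : κ / Real.sinh l * (X / 2) ≤ c := by
    refine le_trans (mul_le_mul (le_max_right _ _) hcX (by positivity) ?_) hc
    exact le_max_of_le_left zero_le_one
  have h2 : κ / Real.sinh l * (X / 2) = 4 * Real.cosh ε ^ 3 / Real.sinh l := by
    rw [hX]; field_simp; ring
  rw [h2, div_le_iff₀ hsl] at h1
  have s1 : Real.sinh l = 4 * Real.sinh (l / 4) * Real.cosh (l / 4) * Real.cosh (l / 2) := by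
    have e1 := Real.sinh_two_mul (l / 2)
    have e2 := Real.sinh_two_mul (l / 4)
    rw [show 2 * (l / 2) = l by ring] at e1
    rw [show 2 * (l / 4) = l / 2 by ring] at e2
    rw [e1, e2]; ring
  have m1 : Real.cosh (l / 4) ≤ Real.cosh ε := by
    rw [Real.cosh_le_cosh, abs_of_nonneg (by linarith), abs_of_nonneg (by linarith)]; linarith
  have m2 : Real.cosh (l / 2) ≤ Real.cosh ε := by
    rw [Real.cosh_le_cosh, abs_of_nonneg (by linarith), abs_of_nonneg (by linarith)]; linarith
  rw [s1] at h1
  have m3 : Real.cosh (l / 4) * Real.cosh (l / 4) * Real.cosh (l / 2) ≤ Real.cosh ε ^ 3 := by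
    calc _ ≤ Real.cosh ε * Real.cosh ε * Real.cosh ε := by gcongr
      _ = _ := by ring
  have m4 : (Real.cosh (l / 4) * Real.cosh (l / 2)) * Real.cosh (l / 4) ≤
      (Real.cosh (l / 4) * Real.cosh (l / 2)) * (Real.sinh (l / 4) * c) := by nlinarith
  exact le_of_mul_le_mul_left m4 (by positivity)

/-- Signed coordinate attached to a letter. -/
def letterCoord (π : Fin 2 → UpperHalfPlane → ℝ) (a : Fin 2 × Bool) (x : UpperHalfPlane) : ℝ :=
  cond a.2 (π a.1 x) (-π a.1 x)

/-- Isometry attached to a letter. -/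
noncomputable def letterAct (f : Fin 2 → (UpperHalfPlane ≃ᵢ UpperHalfPlane)) (a : Fin 2 × Bool) :
    UpperHalfPlane ≃ᵢ UpperHalfPlane := cond a.2 (f a.1) (f a.1)⁻¹

lemma pingpong_aux (f : Fin 2 → (UpperHalfPlane ≃ᵢ UpperHalfPlane))
    (π : Fin 2 → UpperHalfPlane → ℝ) (l w : ℝ) (hw : 0 < w) (hwl : w < l / 2)
    (hlip : ∀ i x y, π i x - π i y ≤ dist x y)
    (hmap : ∀ i x, π i (f i x) = π i x + l)
    (hivt : ∀ i x y c, π i x ≤ c → c ≤ π i y → ∃ z, π i z = c ∧ dist x z + dist z y = dist x y)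
    (hsep : ∀ i j, i ≠ j → ∀ x, w ≤ |π i x| → |π j x| < w)
    (p : UpperHalfPlane) (hp : ∀ i, |π i p| < w)
    (rest : List (Fin 2 × Bool)) : ∀ (a : Fin 2 × Bool), FreeGroup.IsReduced (a :: rest) →
      l - w ≤ letterCoord π a (((a :: rest).map (letterAct f)).prod p) ∧
      ∀ x, letterCoord π a x ≤ l / 2 →
        (l / 2 - w) * rest.length ≤ dist x (((a :: rest).map (letterAct f)).prod p) := by
  have hlip2 : ∀ a x y, letterCoord π a x - letterCoord π a y ≤ dist x y := by
    rintro ⟨i, b⟩ x y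
    cases b
    · have := hlip i y x
      rw [dist_comm] at this
      simp only [letterCoord, cond_false]; linarith
    · exact hlip i x y
  have hmap2 : ∀ a x, letterCoord π a (letterAct f a x) = letterCoord π a x + l := by
    rintro ⟨i, b⟩ x
    cases b
    · have := hmap i ((f i)⁻¹ x)
      rw [IsometryEquiv.apply_inv_self] at this
      simp only [letterCoord, letterAct, cond_false]; linarith
    · exact hmap i x
  have hivt2 : ∀ a x y c, letterCoord π a x ≤ c → c ≤ letterCoord π a y →
      ∃ z, letterCoord π a z = c ∧ dist x z + dist z y = dist x y := by
    rintro ⟨i, b⟩ x y c h1 h2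
    cases b
    · simp only [letterCoord, cond_false] at h1 h2 ⊢
      obtain ⟨z, z1, z2⟩ := hivt i y x (-c) (by linarith) (by linarith)
      refine ⟨z, by linarith, ?_⟩
      rw [dist_comm x z, dist_comm z y, dist_comm x y]; linarith
    · exact hivt i x y c h1 h2
  have habs : ∀ a x, |letterCoord π a x| = |π a.1 x| := by
    rintro ⟨i, b⟩ x
    cases b <;> simp [letterCoord]
  have hsep2 : ∀ a b : Fin 2 × Bool, a.1 ≠ b.1 → ∀ x, w ≤ |letterCoord π a x| → |letterCoord π b x| < w := by
    intro a b hab x hx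
    rw [habs] at *
    exact hsep _ _ hab x hx
  induction rest with
  | nil =>
    intro a _
    simp only [List.map_cons, List.map_nil, List.prod_cons, List.prod_nil, mul_one,
      List.length_nil, Nat.cast_zero, mul_zero, dist_nonneg, implies_true, and_true]
    rw [hmap2]
    have h1 := hp a.1
    rw [← habs] at h1
    linarith [(abs_lt.1 h1).1]
  | cons b rest ih =>
    intro a hred
    rw [FreeGroup.isReduced_cons_cons] at hred
    obtain ⟨hab, hred⟩ := hred
    obtain ⟨ih1, ih2⟩ := ih b hred
    have hprod : ((a :: b :: rest).map (letterAct f)).prod p =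
        letterAct f a (((b :: rest).map (letterAct f)).prod p) := by
      rw [List.map_cons, List.prod_cons]; rfl
    rw [hprod]
    generalize ((b :: rest).map (letterAct f)).prod p = P at *
    have hxx : ∀ x, x = letterAct f a ((letterAct f a)⁻¹ x) := fun x =>
      (IsometryEquiv.apply_inv_self _ _).symm
    by_cases hi : a.1 = b.1
    · have : a = b := Prod.ext hi (hab hi)
      subst this
      refine ⟨by rw [hmap2]; linarith, fun x hx => ?_⟩
      rw [hxx x, hmap2] at hx
      rw [hxx x, (letterAct f a).isometry.dist_eq]
      generalize (letterAct f a)⁻¹ x = x' at *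
      obtain ⟨z, z1, z2⟩ := hivt2 a x' P (l / 2) (by linarith) (by linarith)
      have h1 := ih2 z z1.le
      have h2 := hlip2 a z x'
      rw [dist_comm] at h2
      rw [← z2]
      push_cast [List.length_cons]
      linarith
    · have hPa : |letterCoord π a P| < w := hsep2 b a (Ne.symm hi) P (by
        rw [le_abs]; left; linarith)
      refine ⟨by rw [hmap2]; linarith [(abs_lt.1 hPa).1], fun x hx => ?_⟩
      rw [hxx x, hmap2] at hx
      rw [hxx x, (letterAct f a).isometry.dist_eq]
      generalize (letterAct f a)⁻¹ x = x' at *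
      have h0 : |letterCoord π b x'| < w := hsep2 a b hi x' (by rw [le_abs]; right; linarith)
      obtain ⟨z, z1, z2⟩ := hivt2 b x' P (l / 2) (by linarith [(abs_lt.1 h0).2]) (by linarith)
      have h1 := ih2 z z1.le
      have h3 : |letterCoord π a z| < w := hsep2 b a (Ne.symm hi) z (by
        rw [le_abs]; left; linarith)
      have h2 := hlip2 a z x'
      rw [dist_comm] at h2
      rw [← z2]
      push_cast [List.length_cons]
      linarith [(abs_lt.1 h3).1]

lemma pingpong (f : Fin 2 → (UpperHalfPlane ≃ᵢ UpperHalfPlane))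
    (π : Fin 2 → UpperHalfPlane → ℝ) (l w : ℝ) (hw : 0 < w) (hwl : w < l / 2)
    (hlip : ∀ i x y, π i x - π i y ≤ dist x y)
    (hmap : ∀ i x, π i (f i x) = π i x + l)
    (hivt : ∀ i x y c, π i x ≤ c → c ≤ π i y → ∃ z, π i z = c ∧ dist x z + dist z y = dist x y)
    (hsep : ∀ i j, i ≠ j → ∀ x, w ≤ |π i x| → |π j x| < w)
    (p : UpperHalfPlane) (hp : ∀ i, |π i p| < w) :
    Function.Injective ⇑(FreeGroup.lift f : FreeGroup (Fin 2) →* _) ∧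
      ∀ y : UpperHalfPlane, ∃ c : ℝ, 0 < c ∧ ∃ C : ℝ, 0 ≤ C ∧
        ∀ w : FreeGroup (Fin 2),
          c * (FreeGroup.norm w : ℝ) - C ≤ dist y ((FreeGroup.lift f w) y) := by
  have key := pingpong_aux f π l w hw hwl hlip hmap hivt hsep p hp
  have hl : ∀ v : FreeGroup (Fin 2), FreeGroup.lift f v = ((v.toWord).map (letterAct f)).prod := by
    intro v
    conv_lhs => rw [← FreeGroup.mk_toWord (x := v), FreeGroup.lift_mk]
    rfl
  have hsp : ∀ a, |letterCoord π a p| < w := by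
    rintro ⟨i, b⟩
    cases b <;> simpa [letterCoord] using hp i
  constructor
  · rw [injective_iff_map_eq_one]
    intro v hv1
    rw [← FreeGroup.toWord_eq_nil_iff]
    rw [hl] at hv1
    have hr := FreeGroup.isReduced_toWord (x := v)
    rcases hw' : v.toWord with _ | ⟨a, rest⟩
    · rfl
    · exfalso
      rw [hw'] at hv1 hr
      have := (key rest a hr).1
      rw [hv1] at this
      have h2 := (abs_lt.1 (hsp a)).2
      have e : (1 : UpperHalfPlane ≃ᵢ UpperHalfPlane) p = p := rfl
      rw [e] at this
      linarith
  · intro y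
    refine ⟨l / 2 - w, by linarith, (l / 2 - w) + 2 * dist y p,
      by have := dist_nonneg (x := y) (y := p); linarith, fun v => ?_⟩
    have h1 : dist p (FreeGroup.lift f v p) ≤ dist y (FreeGroup.lift f v y) + 2 * dist y p := by
      have t1 := dist_triangle4 p y (FreeGroup.lift f v y) (FreeGroup.lift f v p)
      rw [(FreeGroup.lift f v).isometry.dist_eq, dist_comm p y] at t1
      linarith
    have h2 : (l / 2 - w) * (FreeGroup.norm v : ℝ) - (l / 2 - w) ≤
        dist p (FreeGroup.lift f v p) := by
      rw [hl]
      have hr := FreeGroup.isReduced_toWord (x := v)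
      unfold FreeGroup.norm
      rcases hw' : v.toWord with _ | ⟨a, rest⟩
      · have := dist_nonneg (x := p) (y := (List.map (letterAct f) []).prod p)
        simp only [List.length_nil, Nat.cast_zero]
        linarith
      · rw [hw'] at hr
        have := (key rest a hr).2 p (by linarith [(abs_lt.1 (hsp a)).2])
        push_cast [List.length_cons]
        linarith
    linarith

/-- Propositions 3.11 and 3.12 for `X = ℍ`: if the closed convex hulls of the Margulis
tubes of two hyperbolic isometries `g, h` with equal translation lengths `l ≤ ε/10` are
at distance at least `L = L(ε)`, then `g, h` generate a free group of rank two which is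
convex-cocompact: every orbit map of the free group `F₂` is a quasiisometric embedding. -/
theorem hyperbolic_pingpong_free_cc (ε : ℝ) (hε : 0 < ε) :
    ∃ L : ℝ, 0 < L ∧ ∀ (g h : UpperHalfPlane ≃ᵢ UpperHalfPlane)
      (γg γh : ℝ → UpperHalfPlane), Isometry γg → Isometry γh →
      ∀ l : ℝ, 0 < l → l ≤ ε / 10 →
      (∀ s : ℝ, g (γg s) = γg (s + l)) →
      (∀ s : ℝ, h (γh s) = γh (s + l)) →
      (⨅ x : UpperHalfPlane, dist x (g x)) = l →
      (⨅ x : UpperHalfPlane, dist x (h x)) = l →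
      ∀ m : ℕ, 1 ≤ m → (m : ℝ) * l ≤ ε / 10 → ε / 10 < ((m : ℝ) + 1) * l →
      (∀ p ∈ hypConvexHull (margulisTube ε g m),
        ∀ q ∈ hypConvexHull (margulisTube ε h m), L ≤ dist p q) →
      Function.Injective
        ⇑(FreeGroup.lift ![g, h] :
          FreeGroup (Fin 2) →* (UpperHalfPlane ≃ᵢ UpperHalfPlane)) ∧
      ∀ y : UpperHalfPlane, ∃ c : ℝ, 0 < c ∧ ∃ C : ℝ, 0 ≤ C ∧
        ∀ w : FreeGroup (Fin 2),
          c * (FreeGroup.norm w : ℝ) - C ≤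
            dist y (((FreeGroup.lift ![g, h] :
              FreeGroup (Fin 2) →* (UpperHalfPlane ≃ᵢ UpperHalfPlane)) w) y) := by
  have hκ : 0 < Real.sinh (ε / 20) := Real.sinh_pos_iff.2 (by linarith)
  have hL : 0 < 16 * Real.cosh ε ^ 3 / Real.sinh (ε / 20) := by
    have := Real.cosh_pos ε
    positivity
  refine ⟨16 * Real.cosh ε ^ 3 / Real.sinh (ε / 20), hL, ?_⟩
  intro g h γg γh hγg hγh l hl hlε hg hh _ _ m hm _ hm2 hdist
  obtain ⟨N, M, hA⟩ := exists_ax γg hγg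
  obtain ⟨N', M', hA'⟩ := exists_ax γh hγh
  have hull : ∀ (k : UpperHalfPlane ≃ᵢ UpperHalfPlane) (x : UpperHalfPlane),
      (∃ i ∈ Finset.Icc 1 m, dist x ((k ^ i) x) ≤ ε) →
      x ∈ hypConvexHull (margulisTube ε k m) := by
    rintro k x ⟨i, hi, hx⟩
    rw [hypConvexHull, Set.mem_sInter]
    intro C hC
    apply hC.1
    simp only [margulisTube, Set.mem_iUnion, Set.mem_setOf_eq]
    exact ⟨i, hi, hx⟩
  have haxis : ∀ (k : UpperHalfPlane ≃ᵢ UpperHalfPlane) (γ : ℝ → UpperHalfPlane),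
      Isometry γ → (∀ s, k (γ s) = γ (s + l)) → ∀ s,
      γ s ∈ hypConvexHull (margulisTube ε k m) := by
    intro k γ hγ hk s
    apply hull
    refine ⟨1, by simp [hm], ?_⟩
    rw [pow_one, hk, hγ.dist_eq, Real.dist_eq, abs_le]
    constructor <;> linarith
  obtain ⟨s, t, b1, b2⟩ := hA.balance hA' _ hL fun s t =>
    hdist _ (haxis g γg hγg hg s) _ (haxis h γh hγh hh t)
  have B := hA.shift s
  have B' := hA'.shift t
  have iB : Isometry fun u => γg (u + s) := hγg.comp (IsometryEquiv.addRight s).isometry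
  have iB' : Isometry fun u => γh (u + t) := hγh.comp (IsometryEquiv.addRight t).isometry
  have gB : ∀ u, g ((fun u => γg (u + s)) u) = (fun u => γg (u + s)) (u + l) := by
    intro u; simp only [hg]; ring_nf
  have hB : ∀ u, h ((fun u => γh (u + t)) u) = (fun u => γh (u + t)) (u + l) := by
    intro u; simp only [hh]; ring_nf
  have hbr := B.bridge B' _ hL b1 b2 (max 1 (Real.sinh (ε / 20) / Real.sinh l)) (le_max_left _ _)
    fun x y hx hy => hdist _
      (hull g x (B.sub_tube g l gB hl ε hε hlε m hm hm2 iB x hx)) _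
      (hull h y (B'.sub_tube h l hB hl ε hε hlε m hm hm2 iB' y hy))
  have hC := const_bound ε l _ hl hlε hbr
  have hD : 0 < dist ((fun u => γg (u + s)) 0) ((fun u => γh (u + t)) 0) :=
    lt_of_lt_of_le hL (hdist _ (haxis g γg hγg hg _) _ (haxis h γh hγh hh _))
  have hsep := B.separation B' b1 b2 hD (l / 4) (by linarith) hC
  have p1 := B.zero_eq
  have p2 := B.zero_eq' (N := Real.exp t • N') (M := Real.exp (-t) • M')
    (by rw [lor_symm, b1, lor_symm]) (by rw [lor_symm, ← b2, lor_symm])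
  have q1 : prj (Real.exp s • N) (Real.exp (-s) • M) ((fun u => γg (u + s)) 0) = 0 := by
    unfold prj
    rw [p1, div_self (B.pos_right _).ne']; simp
  have q2 : prj (Real.exp t • N') (Real.exp (-t) • M') ((fun u => γg (u + s)) 0) = 0 := by
    unfold prj
    rw [p2, div_self (B'.pos_right _).ne']; simp
  refine pingpong ![g, h] ![prj (Real.exp s • N) (Real.exp (-s) • M),
    prj (Real.exp t • N') (Real.exp (-t) • M')] l (l / 4) (by linarith) (by linarith)
    ?_ ?_ ?_ ?_ ((fun u => γg (u + s)) 0) ?_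
  · intro i; fin_cases i
    · exact B.prj_le
    · exact B'.prj_le
  · intro i; fin_cases i
    · exact B.prj_map g l gB
    · exact B'.prj_map h l hB
  · intro i; fin_cases i
    · exact B.ivt
    · exact B'.ivt
  · intro i j hij x
    fin_cases i <;> fin_cases j
    · exact absurd rfl hij
    · intro hx; exact (hsep x).resolve_left (not_lt.2 hx)
    · intro hx; exact (hsep x).resolve_right (not_lt.2 hx)
    · exact absurd rfl hij
  · intro i; fin_cases i
    · show |prj _ _ _| < _
      rw [q1, abs_zero]; linarith
    · show |prj _ _ _| < _
      rw [q2, abs_zero]; linarith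
end
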